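/- arXiv:1301.4463 — 4 statements merged into one kernel-verified Lean document; each statement's English description precedes it below -/
import Mathlib

section
/- Let X be a real-valued Lévy process on a filtered probability space satisfying the usual conditions, with Q^x(B) := P({X(T_x) ∈ B} ∩ {T_x < ∞}) for Borel B ⊆ ℝ and 𝒜 := {x ∈ ℝ : Q^x is carried by a singleton}. If b ∈ 𝒜 and c ∈ (0,b), then either c ∈ 𝒜 or there exists d ∈ (0, b−c] with d ∈ 𝒜. -/
open MeasureTheory ProbabilityTheory Filter Set
open scoped ENNReal Topology

/-- Left limit of a path at time `t`, with the convention `f(0-) := f(0)`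
(and junk `f t` for `t < 0`). -/
noncomputable def leftLimAt (f : ℝ → ℝ) (t : ℝ) : ℝ :=
  if 0 < t then Function.leftLim f t else f t

/-- A path `f : [0,∞) → ℝ` is càdlàg: right-continuous on `[0,∞)`,
with left limits on `(0,∞)`. -/
def IsCadlag (f : ℝ → ℝ) : Prop :=
  (∀ t : ℝ, 0 ≤ t → ContinuousWithinAt f (Set.Ici t) t) ∧
  (∀ t : ℝ, 0 < t → ∃ l : ℝ, Filter.Tendsto f (nhdsWithin t (Set.Iio t)) (nhds l))

/-- `X` is a Lévy process w.r.t. the filtration `F` under `P`, on a filtered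
probability space satisfying the usual conditions. -/
structure IsLevy {Ω : Type*} {m0 : MeasurableSpace Ω} (P : Measure Ω)
    (F : MeasureTheory.Filtration ℝ m0) (X : ℝ → Ω → ℝ) : Prop where
  isProb : IsProbabilityMeasure P
  complete : P.IsComplete
  rightCont : ∀ t : ℝ, F t = ⨅ s : Set.Ioi t, F (s : ℝ)
  nullF0 : ∀ N : Set Ω, P N = 0 → MeasurableSet[F 0] N
  adapted : ∀ t : ℝ, Measurable[F t] (X t)
  start : P {ω | X 0 ω = 0} = 1
  cadlag : ∀ᵐ ω ∂P, IsCadlag (fun t => X t ω)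
  indep : ∀ s t : ℝ, 0 ≤ s → s ≤ t →
    ProbabilityTheory.Indep
      (MeasurableSpace.comap (fun ω => X t ω - X s ω) inferInstance) (F s) P
  statInc : ∀ s t : ℝ, 0 ≤ s → s ≤ t →
    Measure.map (fun ω => X t ω - X s ω) P = Measure.map (X (t - s)) P

/-- First passage time `T_x = inf{t ≥ 0 : X_t ≥ x}` (valued in `[0,∞]`, `inf ∅ = ∞`). -/
noncomputable def hitT {Ω : Type*} (X : ℝ → Ω → ℝ) (x : ℝ) (ω : Ω) : ℝ≥0∞ :=
  sInf ((fun t : ℝ => ENNReal.ofReal t) '' {t : ℝ | 0 ≤ t ∧ x ≤ X t ω})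

/-- First passage time `T̂_x = inf{t ≥ 0 : X_t > x}`. -/
noncomputable def hitThat {Ω : Type*} (X : ℝ → Ω → ℝ) (x : ℝ) (ω : Ω) : ℝ≥0∞ :=
  sInf ((fun t : ℝ => ENNReal.ofReal t) '' {t : ℝ | 0 ≤ t ∧ x < X t ω})

/-- `X(T_x)`, the position at the first passage time (junk if `T_x = ∞`). -/
noncomputable def stopVal {Ω : Type*} (X : ℝ → Ω → ℝ) (x : ℝ) (ω : Ω) : ℝ :=
  X (hitT X x ω).toReal ω

/-- `X(T̂_x)`. -/
noncomputable def stopValHat {Ω : Type*} (X : ℝ → Ω → ℝ) (x : ℝ) (ω : Ω) : ℝ :=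
  X (hitThat X x ω).toReal ω

/-- `Q^x(B) = P({X(T_x) ∈ B} ∩ {T_x < ∞})`. -/
noncomputable def Qfun {Ω : Type*} {m0 : MeasurableSpace Ω} (P : Measure Ω)
    (X : ℝ → Ω → ℝ) (x : ℝ) (B : Set ℝ) : ℝ≥0∞ :=
  P ({ω | stopVal X x ω ∈ B} ∩ {ω | hitT X x ω < ⊤})

/-- Running supremum `X̄_t = sup{X_s : s ∈ [0,t]}`. -/
noncomputable def runSup {Ω : Type*} (X : ℝ → Ω → ℝ) (t : ℝ) (ω : Ω) : ℝ :=
  sSup ((fun s => X s ω) '' Set.Icc 0 t)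


section Helpers

variable {Ω : Type*} {m0 : MeasurableSpace Ω} {P : Measure Ω}
  {F : MeasureTheory.Filtration ℝ m0} {X : ℝ → Ω → ℝ}

/-- The character. -/
noncomputable def ech (x : ℝ) : ℂ := Complex.exp (x * Complex.I)

lemma ech_cont : Continuous ech := by unfold ech; fun_prop

lemma ech_add (x y : ℝ) : ech (x + y) = ech x * ech y := by
  unfold ech; rw [← Complex.exp_add]; congr 1; push_cast; ring

lemma ech_norm (x : ℝ) : ‖ech x‖ = 1 := Complex.norm_exp_ofReal_mul_I x

lemma ech_zero : ech 0 = 1 := by simp [ech]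

lemma levy_meas (hX : IsLevy P F X) (t : ℝ) : Measurable (X t) :=
  (hX.adapted t).mono (F.le t) le_rfl

lemma levy_step (hX : IsLevy P F X) {s t : ℝ} (hs : 0 ≤ s) (hst : s ≤ t) (v : ℝ)
    (G : Ω → ℂ) (hG : Measurable[F s] G) :
    ∫ ω, G ω * ech (v * (X t ω - X s ω)) ∂P
      = (∫ ω, G ω ∂P) * ∫ ω, ech (v * X (t - s) ω) ∂P := by
  have hm : Measurable (fun ω => X t ω - X s ω) := (levy_meas hX t).sub (levy_meas hX s)
  have hGm : Measurable G := hG.mono (F.le s) le_rfl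
  have hec : Measurable (fun x : ℝ => ech (v * x)) := (ech_cont.comp (by fun_prop)).measurable
  have hind : IndepFun (fun ω => X t ω - X s ω) G P := by
    rw [IndepFun_iff_Indep]
    refine indep_of_indep_of_le_right (hX.indep s t hs hst) ?_
    exact hG.comap_le
  have h2 : IndepFun G (fun ω => ech (v * (X t ω - X s ω))) P :=
    (hind.comp hec measurable_id).symm
  rw [h2.integral_fun_mul_eq_mul_integral hGm.aestronglyMeasurable
    (hec.comp hm).aestronglyMeasurable]
  congr 1
  have e1 := integral_map (μ := P) hm.aemeasurable (f := fun x : ℝ => ech (v * x))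
    hec.aestronglyMeasurable
  have e2 := integral_map (μ := P) (levy_meas hX (t - s)).aemeasurable
    (f := fun x : ℝ => ech (v * x)) hec.aestronglyMeasurable
  rw [← e1, ← e2, hX.statInc s t hs hst]

lemma levy_markov_aux (hX : IsLevy P F X) (s : Finset ℝ) : (∀ j ∈ s, 0 ≤ j) → ∀ v : ℝ → ℝ,
    ∃ C : ℂ, ∀ t : ℝ, 0 ≤ t → ∀ G : Ω → ℂ, Measurable[F t] G →
      ∫ ω, G ω * ech (∑ j ∈ s, v j * (X (t + j) ω - X t ω)) ∂P = (∫ ω, G ω ∂P) * C := by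
  classical
  induction s using Finset.induction_on_max with
  | empty =>
    intro _ v
    exact ⟨1, fun t ht G hG => by simp [ech_zero]⟩
  | insert a s hmax ih =>
    intro hpos v
    have hspos : ∀ j ∈ s, 0 ≤ j := fun j hj => hpos j (Finset.mem_insert_of_mem hj)
    have ha : 0 ≤ a := hpos a (Finset.mem_insert_self _ _)
    have has : a ∉ s := fun h => lt_irrefl _ (hmax a h)
    rcases s.eq_empty_or_nonempty with rfl | hne
    · refine ⟨∫ ω, ech (v a * X a ω) ∂P, fun t ht G hG => ?_⟩
      have := levy_step hX ht (show t ≤ t + a by linarith) (v a) G hG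
      simpa using this
    · set m := s.max' hne with hm
      have hms : m ∈ s := s.max'_mem hne
      have hma : m < a := hmax m hms
      obtain ⟨C, hC⟩ := ih hspos (v + Pi.single m (v a))
      refine ⟨C * ∫ ω, ech (v a * X (a - m) ω) ∂P, fun t ht G hG => ?_⟩
      have key : ∀ ω, ∑ j ∈ insert a s, v j * (X (t + j) ω - X t ω)
          = (∑ j ∈ s, (v + Pi.single m (v a) : ℝ → ℝ) j * (X (t + j) ω - X t ω))
            + v a * (X (t + a) ω - X (t + m) ω) := by
        intro ω
        rw [Finset.sum_insert has]
        simp only [Pi.add_apply, add_mul, Finset.sum_add_distrib]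
        have : ∑ j ∈ s, (Pi.single m (v a) : ℝ → ℝ) j * (X (t + j) ω - X t ω)
            = v a * (X (t + m) ω - X t ω) := by
          rw [Finset.sum_eq_single m]
          · simp
          · intro j _ hj; simp [hj]
          · intro h; exact absurd hms h
        rw [this]; ring
      simp_rw [key, ech_add, ← mul_assoc]
      have hG' : Measurable[F (t + m)] (fun ω => G ω *
          ech (∑ j ∈ s, (v + Pi.single m (v a) : ℝ → ℝ) j * (X (t + j) ω - X t ω))) := by
        have h0m : 0 ≤ m := hspos m hms
        refine (hG.mono (F.mono (by linarith)) le_rfl).mul (ech_cont.measurable.comp ?_)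
        refine Finset.measurable_sum _ fun j hj => ?_
        refine Measurable.const_mul ?_ _
        refine ((hX.adapted (t + j)).mono (F.mono ?_) le_rfl).sub
          ((hX.adapted t).mono (F.mono (by linarith)) le_rfl)
        have := s.le_max' j hj
        linarith
      have h1 := levy_step hX (show 0 ≤ t + m by linarith [hspos m hms])
        (show t + m ≤ t + a by linarith) (v a) _ hG'
      rw [h1, hC t ht G hG]
      rw [show t + a - (t + m) = a - m by ring]

lemma levy_zero (hX : IsLevy P F X) : ∀ᵐ ω ∂P, X 0 ω = 0 := by
  have := hX.isProb
  have hm : MeasurableSet {ω | X 0 ω = 0} := levy_meas hX 0 (measurableSet_singleton 0)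
  exact (mem_ae_iff_prob_eq_one hm).2 hX.start

lemma levy_markov (hX : IsLevy P F X) (s : Finset ℝ) (hs : ∀ j ∈ s, 0 ≤ j) (v : ℝ → ℝ)
    {t : ℝ} (ht : 0 ≤ t) (G : Ω → ℂ) (hG : Measurable[F t] G) :
      ∫ ω, G ω * ech (∑ j ∈ s, v j * (X (t + j) ω - X t ω)) ∂P
        = (∫ ω, G ω ∂P) * ∫ ω, ech (∑ j ∈ s, v j * X j ω) ∂P := by
  have := hX.isProb
  obtain ⟨C, hC⟩ := levy_markov_aux hX s hs v
  rw [hC t ht G hG]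
  have h0 := hC 0 le_rfl (fun _ => 1) measurable_const
  simp only [one_mul, zero_add, integral_const, probReal_univ, one_smul] at h0
  rw [← h0]
  congr 1
  refine integral_congr_ae ?_
  filter_upwards [levy_zero hX] with ω hω
  simp [hω]

/-- Rational approximation from above. -/
noncomputable def dy (k : ℕ) (t : ℝ) : ℚ≥0 := ((⌊t * (k + 1)⌋₊ : ℚ≥0) + 1) / ((k : ℚ≥0) + 1)

lemma dy_cast (k : ℕ) (t : ℝ) : ((dy k t : ℚ≥0) : ℝ) = ((⌊t * (k + 1)⌋₊ : ℝ) + 1) / ((k : ℝ) + 1) := by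
  simp [dy]

lemma dy_gt (k : ℕ) (t : ℝ) : t < (dy k t : ℝ) := by
  rw [dy_cast, lt_div_iff₀ (by positivity)]
  exact Nat.lt_floor_add_one _

lemma dy_le (k : ℕ) {t : ℝ} (ht : 0 ≤ t) : (dy k t : ℝ) ≤ t + 1 / ((k : ℝ) + 1) := by
  rw [dy_cast, div_le_iff₀ (by positivity), add_mul, one_div_mul_cancel (by positivity)]
  have := Nat.floor_le (show 0 ≤ t * ((k : ℝ) + 1) by positivity)
  linarith

lemma dy_tendsto {t : ℝ} (ht : 0 ≤ t) : Tendsto (fun k => (dy k t : ℝ)) atTop (𝓝 t) := by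
  have h2 : Tendsto (fun k : ℕ => t + 1 / ((k : ℝ) + 1)) atTop (𝓝 (t + 0)) :=
    tendsto_const_nhds.add tendsto_one_div_add_atTop_nhds_zero_nat
  rw [add_zero] at h2
  exact tendsto_of_tendsto_of_tendsto_of_le_of_le tendsto_const_nhds h2
    (fun k => (dy_gt k t).le) (fun k => dy_le k ht)

lemma cad_dy {f : ℝ → ℝ} (hf : IsCadlag f) {t s : ℝ} (ht : 0 ≤ t) (hs : 0 ≤ s) :
    Tendsto (fun k => f ((dy k t : ℝ) + s)) atTop (𝓝 (f (t + s))) := by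
  have h := hf.1 (t + s) (by linarith)
  refine h.tendsto.comp ?_
  refine tendsto_nhdsWithin_iff.2 ⟨(dy_tendsto ht).add_const s, ?_⟩
  exact Eventually.of_forall fun k => by
    have := dy_gt k t
    simp only [mem_Ici]; linarith

lemma cad_dy0 {f : ℝ → ℝ} (hf : IsCadlag f) {t : ℝ} (ht : 0 ≤ t) :
    Tendsto (fun k => f (dy k t : ℝ)) atTop (𝓝 (f t)) := by
  simpa using cad_dy hf ht le_rfl

lemma meas_nat_comp {α β : Type*} [MeasurableSpace α] [MeasurableSpace β] {Z : ℕ → α → β}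
    (hZ : ∀ n, Measurable (Z n)) {N : α → ℕ} (hN : Measurable N) :
    Measurable (fun a => Z (N a) a) := by
  have : Measurable (fun p : ℕ × α => Z p.1 p.2) := measurable_from_prod_countable_right hZ
  exact this.comp (hN.prodMk measurable_id)

/-- Optional time. -/
def IsOpt (F : MeasureTheory.Filtration ℝ m0) (T : Ω → ℝ≥0∞) : Prop :=
  ∀ t : ℝ, MeasurableSet[F t] {ω | T ω < ENNReal.ofReal t}

lemma IsOpt.meas {T : Ω → ℝ≥0∞} (hT : IsOpt F T) : Measurable T := by
  have h : ∀ t : ℝ, MeasurableSet {ω | T ω < ENNReal.ofReal t} := fun t => F.le t _ (hT t)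
  refine measurable_of_Iio fun x => ?_
  by_cases hx : x = ⊤
  · subst hx
    have : T ⁻¹' Iio ⊤ = ⋃ n : ℕ, {ω | T ω < ENNReal.ofReal n} := by
      ext ω
      simp only [mem_preimage, mem_Iio, mem_iUnion, mem_ofPred_eq]
      constructor
      · intro h
        obtain ⟨n, hn⟩ := ENNReal.exists_nat_gt h.ne
        exact ⟨n, by simpa using hn⟩
      · rintro ⟨n, hn⟩
        exact hn.trans ENNReal.ofReal_lt_top
    rw [this]
    exact MeasurableSet.iUnion fun n => h n
  · have := h x.toReal
    rwa [ENNReal.ofReal_toReal hx] at this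

lemma meas_dy (hX : IsLevy P F X) {T : Ω → ℝ≥0∞} (hT : Measurable T) (k : ℕ) (s : ℝ) :
    Measurable (fun ω => X ((dy k (T ω).toReal : ℝ) + s) ω) := by
  simp_rw [dy_cast]
  exact meas_nat_comp (Z := fun n ω => X (((n : ℝ) + 1) / ((k : ℝ) + 1) + s) ω)
    (N := fun ω => ⌊(T ω).toReal * (k + 1)⌋₊) (fun n => levy_meas hX _)
    (Nat.measurable_floor.comp (hT.ennreal_toReal.mul_const _))

lemma aemeas_stop (hX : IsLevy P F X) {T : Ω → ℝ≥0∞} (hT : Measurable T) {s : ℝ} (hs : 0 ≤ s) :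
    AEMeasurable (fun ω => X ((T ω).toReal + s) ω) P := by
  refine aemeasurable_of_tendsto_metrizable_ae atTop
    (f := fun k ω => X ((dy k (T ω).toReal : ℝ) + s) ω)
    (fun k => (meas_dy hX hT k s).aemeasurable) ?_
  filter_upwards [hX.cadlag] with ω hω
  exact cad_dy hω ENNReal.toReal_nonneg hs

lemma aemeas_stop0 (hX : IsLevy P F X) {T : Ω → ℝ≥0∞} (hT : Measurable T) :
    AEMeasurable (fun ω => X (T ω).toReal ω) P := by
  simpa using aemeas_stop hX hT le_rfl

lemma sm_discrete (hX : IsLevy P F X) {T : Ω → ℝ≥0∞} (hT : IsOpt F T)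
    (s : Finset ℝ) (hs : ∀ j ∈ s, 0 ≤ j) (u : ℝ) (v : ℝ → ℝ) (k : ℕ) :
    ∫ ω in {ω | T ω < ⊤}, ech (u * X (dy k (T ω).toReal : ℝ) ω) *
        ech (∑ j ∈ s, v j * (X ((dy k (T ω).toReal : ℝ) + j) ω - X (dy k (T ω).toReal : ℝ) ω)) ∂P
      = (∫ ω in {ω | T ω < ⊤}, ech (u * X (dy k (T ω).toReal : ℝ) ω) ∂P)
        * ∫ ω, ech (∑ j ∈ s, v j * X j ω) ∂P := by
  have := hX.isProb
  have hTm := hT.meas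
  set t : ℕ → ℝ := fun n => ((n : ℝ) + 1) / ((k : ℝ) + 1) with ht
  set A : ℕ → Set Ω := fun n => {ω | T ω < ⊤ ∧ ⌊(T ω).toReal * (k + 1)⌋₊ = n} with hA
  have hAF : ∀ n, MeasurableSet[F (t n)] (A n) := by
    intro n
    have hk : (0 : ℝ) < (k : ℝ) + 1 := by positivity
    have : A n = {ω | T ω < ENNReal.ofReal (t n)} \
        {ω | T ω < ENNReal.ofReal ((n : ℝ) / ((k : ℝ) + 1))} := by
      ext ω
      simp only [hA, mem_ofPred_eq, Set.mem_sdiff, not_lt]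
      by_cases htop : T ω = ⊤
      · simp [htop]
      · have h0 : 0 ≤ (T ω).toReal * ((k : ℝ) + 1) := by positivity
        rw [ENNReal.ofReal_le_iff_le_toReal htop, ENNReal.lt_ofReal_iff_toReal_lt htop,
          Nat.floor_eq_iff h0, div_le_iff₀ hk, ht, lt_div_iff₀ hk]
        simp [lt_top_iff_ne_top, htop, and_comm]
    rw [this]
    refine (hT _).diff (F.mono ?_ _ (hT _))
    simp only [ht]
    gcongr
    linarith
  have hAm : ∀ n, MeasurableSet (A n) := fun n => F.le _ _ (hAF n)
  have hU : {ω | T ω < ⊤} = ⋃ n, A n := by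
    ext ω; simp [hA]
  have hdisj : Pairwise (Function.onFun Disjoint A) := by
    intro i j hij
    rw [Function.onFun, Set.disjoint_left]
    rintro ω ⟨_, h1⟩ ⟨_, h2⟩
    exact hij (h1.symm.trans h2)
  have hm1 : Measurable (fun ω => ech (u * X (dy k (T ω).toReal : ℝ) ω)) := by
    have := meas_dy hX hTm k 0
    simp only [add_zero] at this
    exact ech_cont.measurable.comp (this.const_mul u)
  have hm2 : Measurable (fun ω => ech (u * X (dy k (T ω).toReal : ℝ) ω) *
        ech (∑ j ∈ s, v j * (X ((dy k (T ω).toReal : ℝ) + j) ω - X (dy k (T ω).toReal : ℝ) ω))) := by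
    refine hm1.mul (ech_cont.measurable.comp (Finset.measurable_sum _ fun j _ => ?_))
    have := meas_dy hX hTm k 0
    simp only [add_zero] at this
    exact ((meas_dy hX hTm k j).sub this).const_mul _
  have hi1 : Integrable (fun ω => ech (u * X (dy k (T ω).toReal : ℝ) ω)) P :=
    Integrable.of_bound hm1.aestronglyMeasurable 1 (by simp [ech_norm])
  have hi2 : Integrable (fun ω => ech (u * X (dy k (T ω).toReal : ℝ) ω) *
        ech (∑ j ∈ s, v j * (X ((dy k (T ω).toReal : ℝ) + j) ω
          - X (dy k (T ω).toReal : ℝ) ω))) P :=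
    Integrable.of_bound hm2.aestronglyMeasurable 1 (by simp [ech_norm])
  rw [hU, integral_iUnion hAm hdisj hi1.integrableOn, integral_iUnion hAm hdisj hi2.integrableOn,
    ← tsum_mul_right]
  congr 1
  funext n
  have hG : Measurable[F (t n)] ((A n).indicator (fun ω => ech (u * X (t n) ω))) := by
    refine Measurable.indicator ?_ (hAF n)
    exact ech_cont.measurable.comp ((hX.adapted (t n)).const_mul u)
  have h := levy_markov hX s hs v (show 0 ≤ t n by simp only [ht]; positivity) _ hG
  rw [integral_indicator (hAm n)] at h
  have hd : ∀ ω ∈ A n, ((dy k (T ω).toReal : ℚ≥0) : ℝ) = t n := by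
    rintro ω ⟨_, h2⟩
    rw [dy_cast, h2]
  have h5 : ∫ ω in A n, ech (u * X (dy k (T ω).toReal : ℝ) ω) ∂P
      = ∫ ω in A n, ech (u * X (t n) ω) ∂P :=
    setIntegral_congr_fun (hAm n) (fun ω hω => by simp only [hd ω hω])
  rw [h5, ← h, ← integral_indicator (hAm n)]
  congr 1
  funext ω
  by_cases hω : ω ∈ A n
  · simp only [indicator_of_mem hω, hd ω hω]
  · simp only [indicator_of_notMem hω, zero_mul]

lemma strong_markov (hX : IsLevy P F X) {T : Ω → ℝ≥0∞} (hT : IsOpt F T)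
    (s : Finset ℝ) (hs : ∀ j ∈ s, 0 ≤ j) (u : ℝ) (v : ℝ → ℝ) :
    ∫ ω in {ω | T ω < ⊤}, ech (u * X (T ω).toReal ω) *
        ech (∑ j ∈ s, v j * (X ((T ω).toReal + j) ω - X (T ω).toReal ω)) ∂P
      = (∫ ω in {ω | T ω < ⊤}, ech (u * X (T ω).toReal ω) ∂P)
        * ∫ ω, ech (∑ j ∈ s, v j * X j ω) ∂P := by
  have := hX.isProb
  have hTm := hT.meas
  have hcad : ∀ᵐ ω ∂(P.restrict {ω | T ω < ⊤}), IsCadlag (fun t => X t ω) :=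
    ae_restrict_of_ae hX.cadlag
  have hx0 : ∀ k, Measurable (fun ω => X (dy k (T ω).toReal : ℝ) ω) := fun k => by
    have := meas_dy hX hTm k 0
    simpa only [add_zero] using this
  have hm1 : ∀ k, Measurable (fun ω => ech (u * X (dy k (T ω).toReal : ℝ) ω)) := fun k =>
    ech_cont.measurable.comp ((hx0 k).const_mul u)
  have hm2 : ∀ k, Measurable (fun ω => ech (u * X (dy k (T ω).toReal : ℝ) ω) *
        ech (∑ j ∈ s, v j * (X ((dy k (T ω).toReal : ℝ) + j) ω
          - X (dy k (T ω).toReal : ℝ) ω))) := fun k => by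
    refine (hm1 k).mul (ech_cont.measurable.comp (Finset.measurable_sum _ fun j _ => ?_))
    exact ((meas_dy hX hTm k j).sub (hx0 k)).const_mul _
  have l1 : Tendsto (fun k : ℕ => ∫ ω in {ω | T ω < ⊤}, ech (u * X (dy k (T ω).toReal : ℝ) ω) ∂P)
      atTop (𝓝 (∫ ω in {ω | T ω < ⊤}, ech (u * X (T ω).toReal ω) ∂P)) := by
    refine tendsto_integral_of_dominated_convergence (fun _ => 1)
      (fun k => (hm1 k).aestronglyMeasurable) (integrable_const _)
      (fun k => by simp [ech_norm]) ?_
    filter_upwards [hcad] with ω hω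
    exact (ech_cont.tendsto _).comp ((cad_dy0 hω ENNReal.toReal_nonneg).const_mul u)
  have l2 : Tendsto (fun k : ℕ => ∫ ω in {ω | T ω < ⊤}, ech (u * X (dy k (T ω).toReal : ℝ) ω) *
        ech (∑ j ∈ s, v j * (X ((dy k (T ω).toReal : ℝ) + j) ω
          - X (dy k (T ω).toReal : ℝ) ω)) ∂P)
      atTop (𝓝 (∫ ω in {ω | T ω < ⊤}, ech (u * X (T ω).toReal ω) *
        ech (∑ j ∈ s, v j * (X ((T ω).toReal + j) ω - X (T ω).toReal ω)) ∂P)) := by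
    refine tendsto_integral_of_dominated_convergence (fun _ => 1)
      (fun k => (hm2 k).aestronglyMeasurable) (integrable_const _)
      (fun k => by simp [ech_norm]) ?_
    filter_upwards [hcad] with ω hω
    have a0 := cad_dy0 hω (t := (T ω).toReal) ENNReal.toReal_nonneg
    refine ((ech_cont.tendsto _).comp (a0.const_mul u)).mul
      ((ech_cont.tendsto _).comp (tendsto_finsetSum _ fun j hj => ?_))
    exact ((cad_dy hω ENNReal.toReal_nonneg (hs j hj)).sub a0).const_mul _
  refine tendsto_nhds_unique l2 ?_
  simp_rw [sm_discrete hX hT s hs u v]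
  exact l1.mul_const _

/-- Passage time over rational times. -/
noncomputable def th (x : ℝ) (w : ℚ≥0 → ℝ) : ℝ≥0∞ :=
  ⨅ q : ℚ≥0, if x < w q then ENNReal.ofReal (q : ℝ) else ⊤

/-- Limit of passage times from below. -/
noncomputable def Sx (x : ℝ) (w : ℚ≥0 → ℝ) : ℝ≥0∞ := ⨆ n : ℕ, th (x - 1 / ((n : ℝ) + 1)) w

lemma th_lt {x : ℝ} {w : ℚ≥0 → ℝ} {a : ℝ≥0∞} :
    th x w < a ↔ ∃ q : ℚ≥0, x < w q ∧ ENNReal.ofReal (q : ℝ) < a := by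
  unfold th
  rw [iInf_lt_iff]
  refine exists_congr fun q => ?_
  by_cases h : x < w q <;> simp [h]

lemma th_le {x : ℝ} {w : ℚ≥0 → ℝ} {q : ℚ≥0} (h : x < w q) : th x w ≤ ENNReal.ofReal (q : ℝ) := by
  refine (iInf_le _ q).trans ?_
  simp [h]

lemma th_mono {x y : ℝ} (hxy : x ≤ y) (w : ℚ≥0 → ℝ) : th x w ≤ th y w := by
  refine le_of_forall_gt fun a ha => ?_
  obtain ⟨q, h1, h2⟩ := th_lt.1 ha
  exact th_lt.2 ⟨q, hxy.trans_lt h1, h2⟩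

lemma th_seq_mono (x : ℝ) (w : ℚ≥0 → ℝ) : Monotone fun n : ℕ => th (x - 1 / ((n : ℝ) + 1)) w := by
  intro n m hnm
  refine th_mono ?_ w
  have : (1 : ℝ) / ((m : ℝ) + 1) ≤ 1 / ((n : ℝ) + 1) := by
    apply one_div_le_one_div_of_le (by positivity)
    have : (n : ℝ) ≤ m := by exact_mod_cast hnm
    linarith
  linarith

lemma th_opt (hX : IsLevy P F X) (x : ℝ) : IsOpt F (fun ω => th x (fun q => X q ω)) := by
  intro t
  have : {ω | th x (fun q => X q ω) < ENNReal.ofReal t}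
      = ⋃ q : ℚ≥0, ⋃ _ : (q : ℝ) < t, {ω | x < X q ω} := by
    ext ω
    simp only [mem_ofPred_eq, th_lt, mem_iUnion]
    refine exists_congr fun q => ?_
    rw [ENNReal.ofReal_lt_ofReal_iff']
    constructor
    · rintro ⟨h1, h2, _⟩; exact ⟨h2, h1⟩
    · rintro ⟨h2, h1⟩; exact ⟨h1, h2, lt_of_le_of_lt (NNRat.cast_nonneg q) h2⟩
  rw [this]
  refine MeasurableSet.iUnion fun q => MeasurableSet.iUnion fun hq => ?_
  exact F.mono hq.le _ ((hX.adapted q) measurableSet_Ioi)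

lemma Sx_opt (hX : IsLevy P F X) (x : ℝ) : IsOpt F (fun ω => Sx x (fun q => X q ω)) := by
  intro t
  have : {ω | Sx x (fun q => X q ω) < ENNReal.ofReal t}
      = ⋃ m : ℕ, ⋂ n : ℕ, {ω | th (x - 1 / ((n : ℝ) + 1)) (fun q => X q ω)
          < ENNReal.ofReal (t - 1 / ((m : ℝ) + 1))} := by
    ext ω
    simp only [mem_ofPred_eq, mem_iUnion, mem_iInter]
    constructor
    · intro h
      have ht : 0 < t := by
        by_contra h0
        rw [ENNReal.ofReal_of_nonpos (not_lt.1 h0)] at h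
        exact not_lt_bot h
      have hlim : Tendsto (fun m : ℕ => ENNReal.ofReal (t - 1 / ((m : ℝ) + 1))) atTop
          (𝓝 (ENNReal.ofReal (t - 0))) :=
        ENNReal.tendsto_ofReal
          (tendsto_const_nhds.sub tendsto_one_div_add_atTop_nhds_zero_nat)
      rw [sub_zero] at hlim
      obtain ⟨m, hm⟩ := (hlim.eventually (lt_mem_nhds h)).exists
      exact ⟨m, fun n => (le_iSup (fun n : ℕ => th (x - 1 / ((n : ℝ) + 1)) _) n).trans_lt hm⟩
    · rintro ⟨m, hm⟩
      have h1 : 0 < t - 1 / ((m : ℝ) + 1) :=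
        ENNReal.ofReal_pos.1 (lt_of_le_of_lt (zero_le) (hm 0))
      have h2 : (0 : ℝ) < 1 / ((m : ℝ) + 1) := by positivity
      refine lt_of_le_of_lt (iSup_le fun n => (hm n).le) ?_
      exact (ENNReal.ofReal_lt_ofReal_iff (by linarith)).2 (by linarith)
  rw [this]
  refine MeasurableSet.iUnion fun m => MeasurableSet.iInter fun n => ?_
  have h2 : (0 : ℝ) < 1 / ((m : ℝ) + 1) := by positivity
  exact F.mono (by linarith) _ (th_opt hX _ _)

lemma min_opt {T : Ω → ℝ≥0∞} (hT : IsOpt F T) (K : ℝ≥0∞) : IsOpt F (fun ω => min (T ω) K) := by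
  intro t
  have : {ω | min (T ω) K < ENNReal.ofReal t}
      = {ω | T ω < ENNReal.ofReal t} ∪ {_ω | K < ENNReal.ofReal t} := by
    ext ω; simp
  rw [this]
  exact (hT t).union (MeasurableSet.const _)

/-! Pathwise facts. -/

lemma th_le_of_lt {f : ℝ → ℝ} (hf : IsCadlag f) {x t : ℝ} (ht : 0 ≤ t) (h : x < f t) :
    th x (fun q => f q) ≤ ENNReal.ofReal t := by
  have h1 := cad_dy0 hf ht
  have h2 : ∀ᶠ k in atTop, th x (fun q => f q) ≤ ENNReal.ofReal (dy k t : ℝ) := by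
    filter_upwards [h1.eventually (lt_mem_nhds h)] with k hk
    exact th_le hk
  exact ge_of_tendsto (ENNReal.tendsto_ofReal (dy_tendsto ht)) h2

lemma le_of_th {f : ℝ → ℝ} (hf : IsCadlag f) {x : ℝ} (h : th x (fun q => f q) < ⊤) :
    x ≤ f (th x (fun q => f q)).toReal := by
  by_contra hlt
  push Not at hlt
  set θ := (th x (fun q => f q)).toReal with hθ
  have h0 : 0 ≤ θ := ENNReal.toReal_nonneg
  have h1 := (hf.1 θ h0).eventually (gt_mem_nhds hlt)
  obtain ⟨u, hu, hsub⟩ := mem_nhdsGE_iff_exists_Ico_subset.1 h1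
  have hu' : θ < u := hu
  have h2 : th x (fun q => f q) < ENNReal.ofReal u := by
    rw [ENNReal.lt_ofReal_iff_toReal_lt h.ne]; exact hu'
  obtain ⟨q, hq1, hq2⟩ := th_lt.1 h2
  have h3 : θ ≤ (q : ℝ) := ENNReal.toReal_le_of_le_ofReal (NNRat.cast_nonneg q) (th_le hq1)
  have h4 : (q : ℝ) < u := (ENNReal.ofReal_lt_ofReal_iff (by linarith)).1 hq2
  have h5 : f q < x := hsub ⟨h3, h4⟩
  exact absurd hq1 (not_lt.2 h5.le)

lemma cad_mono_lim {f : ℝ → ℝ} (hf : IsCadlag f) {s : ℕ → ℝ} {a : ℝ} (hs : Monotone s)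
    (h0 : ∀ n, 0 ≤ s n) (hl : Tendsto s atTop (𝓝 a)) :
    ∃ l, Tendsto (fun n => f (s n)) atTop (𝓝 l) := by
  have hle : ∀ n, s n ≤ a := fun n => hs.ge_of_tendsto hl n
  by_cases h : ∃ N, s N = a
  · obtain ⟨N, hN⟩ := h
    refine ⟨f a, tendsto_const_nhds.congr' ?_⟩
    filter_upwards [eventually_ge_atTop N] with n hn
    rw [le_antisymm (hle n) (hN ▸ hs hn)]
  · push Not at h
    have hlt : ∀ n, s n < a := fun n => lt_of_le_of_ne (hle n) (h n)
    obtain ⟨l, hl'⟩ := hf.2 a ((h0 0).trans_lt (hlt 0))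
    exact ⟨l, hl'.comp (tendsto_nhdsWithin_iff.2 ⟨hl, Eventually.of_forall hlt⟩)⟩

lemma qlc (hX : IsLevy P F X) {T : ℕ → Ω → ℝ≥0∞} (hT : ∀ n, IsOpt F (T n))
    (hmono : ∀ ω, Monotone fun n => T n ω) (K : ℝ≥0∞) (hK : K ≠ ⊤) (hb : ∀ n ω, T n ω ≤ K) :
    ∀ᵐ ω ∂P, Tendsto (fun n => X (T n ω).toReal ω) atTop (𝓝 (X (⨆ n, T n ω).toReal ω)) := by
  have := hX.isProb
  set R : ℕ → Ω → ℝ := fun n ω => (T n ω).toReal with hR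
  set ρ : Ω → ℝ := fun ω => (⨆ n, T n ω).toReal with hρ
  have hTtop : ∀ n ω, T n ω ≠ ⊤ := fun n ω => ((hb n ω).trans_lt hK.lt_top).ne
  have hsup : ∀ ω, (⨆ n, T n ω) ≠ ⊤ := fun ω =>
    ((iSup_le fun n => hb n ω).trans_lt hK.lt_top).ne
  have hRmono : ∀ ω, Monotone fun n => R n ω := fun ω n m hnm =>
    ENNReal.toReal_mono (hTtop m ω) (hmono ω hnm)
  have hRlim : ∀ ω, Tendsto (fun n => R n ω) atTop (𝓝 (ρ ω)) := fun ω =>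
    (ENNReal.tendsto_toReal (hsup ω)).comp (tendsto_atTop_iSup (hmono ω))
  have hR0 : ∀ n ω, 0 ≤ R n ω := fun n ω => ENNReal.toReal_nonneg
  have hTm : ∀ n, Measurable (T n) := fun n => (hT n).meas
  set tm : ℕ → ℝ := fun m => 1 / ((m : ℝ) + 1) with htm
  have htm0 : ∀ m, 0 < tm m := fun m => by simp only [htm]; positivity
  have html : Tendsto tm atTop (𝓝 0) := tendsto_one_div_add_atTop_nhds_zero_nat
  set L : Ω → ℝ := fun ω => limUnder atTop (fun n => X (R n ω) ω) with hL
  set M : ℕ → Ω → ℝ := fun m ω => limUnder atTop (fun n => X (R n ω + tm m) ω) with hM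
  have hLl : ∀ᵐ ω ∂P, Tendsto (fun n => X (R n ω) ω) atTop (𝓝 (L ω)) := by
    filter_upwards [hX.cadlag] with ω hω
    exact tendsto_nhds_limUnder
      (cad_mono_lim hω (hRmono ω) (fun n => hR0 n ω) (hRlim ω))
  have hMl : ∀ m, ∀ᵐ ω ∂P, Tendsto (fun n => X (R n ω + tm m) ω) atTop (𝓝 (M m ω)) := by
    intro m
    filter_upwards [hX.cadlag] with ω hω
    exact tendsto_nhds_limUnder (cad_mono_lim hω (s := fun n => R n ω + tm m)
      (fun a b hab => by have := hRmono ω hab; simp only at this ⊢; linarith)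
      (fun n => by have := hR0 n ω; have := htm0 m; linarith) ((hRlim ω).add_const _))
  have hMlim : ∀ᵐ ω ∂P, Tendsto (fun m => M m ω) atTop (𝓝 (X (ρ ω) ω)) := by
    filter_upwards [hX.cadlag, ae_all_iff.2 hMl] with ω hω hml
    rw [Metric.tendsto_atTop']
    intro ε hε
    have h1 := (hω.1 (ρ ω) ENNReal.toReal_nonneg).eventually
      (Metric.ball_mem_nhds _ (half_pos hε))
    obtain ⟨u, hu, hsub⟩ := mem_nhdsGE_iff_exists_Ico_subset.1 h1
    have hu' : ρ ω < u := hu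
    have h2 : ∀ᶠ m in atTop, tm m < u - ρ ω := html.eventually (gt_mem_nhds (by linarith))
    obtain ⟨m0, hm0⟩ := eventually_atTop.1 h2
    refine ⟨m0, fun m hm => ?_⟩
    have h3 := hm0 m hm.le
    have h4 : ∀ᶠ n in atTop, ρ ω - tm m < R n ω :=
      (hRlim ω).eventually (lt_mem_nhds (by have := htm0 m; linarith))
    have h5 : ∀ᶠ n in atTop, dist (X (R n ω + tm m) ω) (X (ρ ω) ω) ≤ ε / 2 := by
      filter_upwards [h4] with n hn
      have h6 : R n ω ≤ ρ ω := (hRmono ω).ge_of_tendsto (hRlim ω) n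
      have h7 : R n ω + tm m ∈ Ico (ρ ω) u := ⟨by linarith, by linarith⟩
      exact (hsub h7 : _ < _).le
    have h8 := le_of_tendsto ((hml m).dist tendsto_const_nhds) h5
    linarith
  have hXm : ∀ n, AEMeasurable (fun ω => X (R n ω) ω) P := fun n => aemeas_stop0 hX (hTm n)
  have hXm' : ∀ n m, AEMeasurable (fun ω => X (R n ω + tm m) ω) P := fun n m =>
    aemeas_stop hX (hTm n) (htm0 m).le
  have hLm : AEMeasurable L P := aemeasurable_of_tendsto_metrizable_ae atTop hXm hLl
  have hMm : ∀ m, AEMeasurable (M m) P := fun m =>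
    aemeasurable_of_tendsto_metrizable_ae atTop (fun n => hXm' n m) (hMl m)
  have hρm : AEMeasurable (fun ω => X (ρ ω) ω) P :=
    aemeasurable_of_tendsto_metrizable_ae atTop hMm hMlim
  have eqv : ∀ v : ℝ, ∫ ω, ech (v * (X (ρ ω) ω - L ω)) ∂P = 1 := by
    intro v
    have s1 : ∀ n m, ∫ ω, ech (v * (X (R n ω + tm m) ω - X (R n ω) ω)) ∂P
        = ∫ ω, ech (v * X (tm m) ω) ∂P := by
      intro n m
      have h := strong_markov hX (hT n) {tm m} (by simpa using (htm0 m).le) 0 (fun _ => v)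
      have hu : {ω | T n ω < ⊤} = univ := by
        ext ω; simpa using (hTtop n ω).lt_top
      rw [hu] at h
      simpa [ech_zero] using h
    have s2 : ∀ m, ∫ ω, ech (v * (M m ω - L ω)) ∂P = ∫ ω, ech (v * X (tm m) ω) ∂P := by
      intro m
      refine tendsto_nhds_unique (f := fun n : ℕ =>
        ∫ ω, ech (v * (X (R n ω + tm m) ω - X (R n ω) ω)) ∂P) (l := atTop) ?_ ?_
      · refine tendsto_integral_of_dominated_convergence (fun _ => 1)
          (fun n => (ech_cont.measurable.comp_aemeasurable
            (((hXm' n m).sub (hXm n)).const_mul v)).aestronglyMeasurable)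
          (integrable_const _) (fun k => by simp [ech_norm]) ?_
        filter_upwards [hLl, hMl m] with ω h1 h2
        exact (ech_cont.tendsto _).comp ((h2.sub h1).const_mul v)
      · simp_rw [fun n => s1 n m]; exact tendsto_const_nhds
    refine tendsto_nhds_unique (f := fun m : ℕ => ∫ ω, ech (v * (M m ω - L ω)) ∂P)
      (l := atTop) ?_ ?_
    · refine tendsto_integral_of_dominated_convergence (fun _ => 1)
          (fun m => (ech_cont.measurable.comp_aemeasurable
            (((hMm m).sub hLm).const_mul v)).aestronglyMeasurable)
          (integrable_const _) (fun k => by simp [ech_norm]) ?_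
      filter_upwards [hMlim] with ω h1
      exact (ech_cont.tendsto _).comp ((h1.sub tendsto_const_nhds).const_mul v)
    · simp_rw [s2]
      have h1 : (1 : ℂ) = ∫ _ω, (1 : ℂ) ∂P := by simp
      rw [h1]
      refine tendsto_integral_of_dominated_convergence (fun _ => 1)
          (fun m => (ech_cont.measurable.comp
            ((levy_meas hX (tm m)).const_mul v)).aestronglyMeasurable)
          (integrable_const _) (fun k => by simp [ech_norm]) ?_
      filter_upwards [hX.cadlag, levy_zero hX] with ω hω h0
      have h2 : Tendsto (fun m => X (tm m) ω) atTop (𝓝 (X 0 ω)) :=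
        (hω.1 0 le_rfl).tendsto.comp
          (tendsto_nhdsWithin_iff.2 ⟨html, Eventually.of_forall fun m => (htm0 m).le⟩)
      have h3 := (ech_cont.tendsto _).comp (h2.const_mul v)
      rw [h0, mul_zero, ech_zero] at h3
      exact h3
  have hJ : AEMeasurable (fun ω => X (ρ ω) ω - L ω) P := hρm.sub hLm
  have hprob : IsProbabilityMeasure (P.map (fun ω => X (ρ ω) ω - L ω)) :=
    Measure.isProbabilityMeasure_map hJ
  have hdir : P.map (fun ω => X (ρ ω) ω - L ω) = Measure.dirac 0 := by
    refine Measure.ext_of_charFun ?_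
    ext v
    rw [charFun_dirac, charFun_apply_real, integral_map hJ (by fun_prop)]
    have := eqv v
    simp only [ech] at this
    simpa using this
  have hz : ∀ᵐ z ∂(P.map (fun ω => X (ρ ω) ω - L ω)), z = 0 := by
    rw [hdir, ae_dirac_eq]; exact Filter.eventually_pure.2 rfl
  have hz' := ae_of_ae_map hJ hz
  filter_upwards [hz', hLl] with ω h1 h2
  have : X (ρ ω) ω = L ω := by linarith
  rw [this]; exact h2

lemma Sx_le {f : ℝ → ℝ} (hf : IsCadlag f) {x t : ℝ} (ht : 0 ≤ t) (h : x ≤ f t) :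
    Sx x (fun q => f q) ≤ ENNReal.ofReal t := by
  refine iSup_le fun n => th_le_of_lt hf ht ?_
  have : (0 : ℝ) < 1 / ((n : ℝ) + 1) := by positivity
  linarith

lemma hit_eq (hX : IsLevy P F X) (x : ℝ) :
    ∀ᵐ ω ∂P, hitT X x ω = Sx x (fun q => X q ω) ∧
      (Sx x (fun q => X q ω) < ⊤ → x ≤ X (Sx x (fun q => X q ω)).toReal ω) := by
  have hq : ∀ K : ℕ, ∀ᵐ ω ∂P, Tendsto
      (fun n : ℕ => X (min (th (x - 1 / ((n : ℝ) + 1)) (fun q => X q ω)) K).toReal ω) atTop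
      (𝓝 (X (⨆ n : ℕ, min (th (x - 1 / ((n : ℝ) + 1)) (fun q => X q ω)) K).toReal ω)) := by
    intro K
    exact qlc hX (T := fun n ω => min (th (x - 1 / ((n : ℝ) + 1)) (fun q => X q ω)) K)
      (fun n => min_opt (th_opt hX _) _)
      (fun ω n m hnm => min_le_min (th_seq_mono x _ hnm) le_rfl) K (by simp)
      (fun n ω => min_le_right _ _)
  filter_upwards [hX.cadlag, ae_all_iff.2 hq] with ω hω hq
  have hle : Sx x (fun q => X q ω) ≤ hitT X x ω := by
    refine le_sInf ?_
    rintro _ ⟨t, ⟨ht, hxt⟩, rfl⟩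
    exact Sx_le hω ht hxt
  have hval : Sx x (fun q => X q ω) < ⊤ → x ≤ X (Sx x (fun q => X q ω)).toReal ω := by
    intro hfin
    obtain ⟨K, hK⟩ := ENNReal.exists_nat_gt hfin.ne
    have h1 : ∀ n : ℕ, th (x - 1 / ((n : ℝ) + 1)) (fun q => X q ω) ≤ Sx x (fun q => X q ω) :=
      fun n => le_iSup (fun n : ℕ => th (x - 1 / ((n : ℝ) + 1)) (fun q => X q ω)) n
    have h2 : ∀ n : ℕ, min (th (x - 1 / ((n : ℝ) + 1)) (fun q => X q ω)) (K : ℝ≥0∞)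
        = th (x - 1 / ((n : ℝ) + 1)) (fun q => X q ω) :=
      fun n => min_eq_left ((h1 n).trans hK.le)
    have h3 := hq K
    simp_rw [h2] at h3
    have h4 : Tendsto (fun n : ℕ => x - 1 / ((n : ℝ) + 1)) atTop (𝓝 (x - 0)) :=
      tendsto_const_nhds.sub tendsto_one_div_add_atTop_nhds_zero_nat
    rw [sub_zero] at h4
    exact le_of_tendsto_of_tendsto' h4 h3 fun n => le_of_th hω ((h1 n).trans_lt hfin)
  refine ⟨le_antisymm ?_ hle, hval⟩
  by_cases hfin : Sx x (fun q => X q ω) < ⊤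
  · refine sInf_le ⟨(Sx x (fun q => X q ω)).toReal, ⟨ENNReal.toReal_nonneg, hval hfin⟩, ?_⟩
    exact ENNReal.ofReal_toReal hfin.ne
  · rw [not_lt_top_iff.1 hfin]; exact le_top

lemma sm_cond (hX : IsLevy P F X) {T : Ω → ℝ≥0∞} (hT : IsOpt F T)
    (I : Finset ℚ≥0) (u : ℝ) (c : I → ℝ) :
    ∫ ω, ech (u * X (T ω).toReal ω) *
        ech (∑ q : I, c q * (X ((T ω).toReal + (q : ℚ≥0)) ω - X (T ω).toReal ω))
          ∂(P[|{ω | T ω < ⊤}])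
      = (∫ ω, ech (u * X (T ω).toReal ω) ∂(P[|{ω | T ω < ⊤}]))
        * ∫ ω, ech (∑ q : I, c q * X (q : ℚ≥0) ω) ∂P := by
  classical
  have hinj : Function.Injective (fun q : I => ((q : ℚ≥0) : ℝ)) := fun a b h =>
    Subtype.ext (NNRat.cast_injective h)
  set s : Finset ℝ := (Finset.univ : Finset I).map ⟨_, hinj⟩ with hs
  set v : ℝ → ℝ := Function.extend (fun q : I => ((q : ℚ≥0) : ℝ)) c 0 with hv
  have hvq : ∀ q : I, v ((q : ℚ≥0) : ℝ) = c q := fun q => hinj.extend_apply c 0 q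
  have h := strong_markov hX hT s (by
    intro j hj
    simp only [hs, Finset.mem_map, Finset.mem_univ, Function.Embedding.coeFn_mk, true_and] at hj
    obtain ⟨q, rfl⟩ := hj
    exact NNRat.cast_nonneg _) u v
  simp only [hs, Finset.sum_map, Function.Embedding.coeFn_mk, hvq] at h
  simp only [ProbabilityTheory.cond, integral_smul_measure, h, smul_mul_assoc]

lemma dual_pi {ι : Type*} [Fintype ι] [DecidableEq ι] (L : StrongDual ℝ (ι → ℝ)) (y : ι → ℝ) :
    L y = ∑ i, L (Pi.single i 1) * y i := by
  conv_lhs => rw [← Finset.univ_sum_single y]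
  rw [map_sum]
  refine Finset.sum_congr rfl fun i _ => ?_
  have : (Pi.single i (y i) : ι → ℝ) = y i • Pi.single i 1 := by
    rw [← Pi.single_smul]; simp
  rw [this, map_smul, smul_eq_mul, mul_comm]

lemma path_law (hX : IsLevy P F X) {T : Ω → ℝ≥0∞} (hT : IsOpt F T)
    (hpos : P {ω | T ω < ⊤} ≠ 0) :
    IndepFun (fun ω => X (T ω).toReal ω)
      (fun ω (q : ℚ≥0) => X ((T ω).toReal + q) ω - X (T ω).toReal ω) (P[|{ω | T ω < ⊤}]) ∧
    (P[|{ω | T ω < ⊤}]).map (fun ω (q : ℚ≥0) => X ((T ω).toReal + q) ω - X (T ω).toReal ω)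
      = P.map (fun ω (q : ℚ≥0) => X q ω) := by
  classical
  have := hX.isProb
  have hprob : IsProbabilityMeasure (P[|{ω | T ω < ⊤}]) := cond_isProbabilityMeasure hpos
  have hac : P[|{ω | T ω < ⊤}] ≪ P := cond_absolutelyContinuous
  set μ := P[|{ω | T ω < ⊤}] with hμ
  have hXT : AEMeasurable (fun ω => X (T ω).toReal ω) μ := (aemeas_stop0 hX hT.meas).mono_ac hac
  have hY : ∀ q : ℚ≥0, AEMeasurable (fun ω => X ((T ω).toReal + q) ω - X (T ω).toReal ω) μ :=
    fun q => ((aemeas_stop hX hT.meas (NNRat.cast_nonneg q)).mono_ac hac).sub hXT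
  have hYI : ∀ I : Finset ℚ≥0, AEMeasurable
      (fun ω (q : I) => X ((T ω).toReal + (q : ℚ≥0)) ω - X (T ω).toReal ω) μ :=
    fun I => aemeasurable_pi_lambda _ fun q => hY q
  have hZI : ∀ I : Finset ℚ≥0, AEMeasurable (fun ω (q : I) => X (q : ℚ≥0) ω) P :=
    fun I => aemeasurable_pi_lambda _ fun q => (levy_meas hX _).aemeasurable
  have hfd : ∀ I : Finset ℚ≥0,
      μ.map (fun ω (q : I) => X ((T ω).toReal + (q : ℚ≥0)) ω - X (T ω).toReal ω)
        = P.map (fun ω (q : I) => X (q : ℚ≥0) ω) := by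
    intro I
    refine Measure.ext_of_charFunDual ?_
    ext L
    rw [charFunDual_apply, charFunDual_apply, integral_map (hYI I) (by fun_prop),
      integral_map (hZI I) (by fun_prop)]
    obtain ⟨a, ha⟩ : ∃ a : I → ℝ, ∀ y, L y = ∑ q, a q * y q := ⟨_, dual_pi L⟩
    have h := sm_cond hX hT I 0 a
    simp only [zero_mul, ech_zero, one_mul, integral_const, probReal_univ, one_smul, ← hμ] at h
    simp only [ha]
    exact h
  constructor
  · refine IndepFun.indepFun_process₀ hXT hY fun I => ?_
    rw [indepFun_iff_charFunDual_prod hXT (hYI I)]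
    intro L
    rw [hfd I, charFunDual_apply, charFunDual_apply, charFunDual_apply,
      integral_map (hXT.prodMk (hYI I)) (by fun_prop), integral_map hXT (by fun_prop),
      integral_map (hZI I) (by fun_prop)]
    have e1 : ∀ x : ℝ, (L.comp (ContinuousLinearMap.inl ℝ ℝ (I → ℝ))) x = L (1, 0) * x := by
      intro x
      have : ((x, 0) : ℝ × (I → ℝ)) = x • (1, 0) := by simp
      simp only [ContinuousLinearMap.comp_apply, ContinuousLinearMap.inl_apply]
      rw [this, map_smul, smul_eq_mul, mul_comm]
    have e2 : ∀ y : I → ℝ, (L.comp (ContinuousLinearMap.inr ℝ ℝ (I → ℝ))) y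
        = ∑ q, (fun q : I => L (0, Pi.single q 1)) q * y q := by
      intro y
      rw [dual_pi (L.comp (ContinuousLinearMap.inr ℝ ℝ (I → ℝ)))]
      simp
    have e3 : ∀ (x : ℝ) (y : I → ℝ), L (x, y) = L (1, 0) * x + ∑ q, (fun q : I => L (0, Pi.single q 1)) q * y q := by
      intro x y
      rw [← e1, ← e2]
      simp [← map_add]
    generalize L (1, 0) = a0 at e1 e3
    generalize (fun q : I => L (0, Pi.single q 1)) = a at e2 e3
    have h := sm_cond hX hT I a0 a
    simp only [e1, e2, e3]
    simp only [← ech_add] at h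
    exact h
  · have hYm : AEMeasurable
        (fun ω (q : ℚ≥0) => X ((T ω).toReal + q) ω - X (T ω).toReal ω) μ :=
      aemeasurable_pi_lambda _ hY
    have hZm : AEMeasurable (fun ω (q : ℚ≥0) => X q ω) P :=
      aemeasurable_pi_lambda _ fun q => (levy_meas hX _).aemeasurable
    have p1 := isProjectiveLimit_map
      (X := fun (q : ℚ≥0) ω => X ((T ω).toReal + q) ω - X (T ω).toReal ω) hYm
    have p2 := isProjectiveLimit_map (X := fun (q : ℚ≥0) ω => X q ω) hZm
    have hfd' : ∀ I : Finset ℚ≥0,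
      μ.map (fun ω => I.restrict (fun q : ℚ≥0 => X ((T ω).toReal + q) ω - X (T ω).toReal ω))
        = P.map (fun ω => I.restrict (fun q : ℚ≥0 => X q ω)) := hfd
    simp only [hfd'] at p1
    exact p1.unique p2

/-! Pathwise decomposition. -/

lemma cad_shift {f : ℝ → ℝ} (hf : IsCadlag f) {T : ℝ} (hT : 0 ≤ T) (y : ℝ) :
    IsCadlag (fun s => f (T + s) - y) := by
  constructor
  · intro t ht
    refine ContinuousWithinAt.sub ?_ continuousWithinAt_const
    refine (hf.1 (T + t) (by linarith)).comp (by fun_prop) ?_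
    intro s hs
    have : t ≤ s := hs
    simp only [mem_Ici]; linarith
  · intro t ht
    obtain ⟨l, hl⟩ := hf.2 (T + t) (by linarith)
    refine ⟨l - y, (hl.comp ?_).sub_const y⟩
    refine tendsto_nhdsWithin_iff.2 ⟨?_, ?_⟩
    · exact ((continuous_const.add continuous_id).tendsto t).mono_left nhdsWithin_le_nhds
    · filter_upwards [self_mem_nhdsWithin] with s hs
      have : s < t := hs
      simp only [mem_Iio]; linarith

lemma th_decomp {f : ℝ → ℝ} (hf : IsCadlag f) {c z y : ℝ} (hcz : c ≤ z)
    (hT : Sx c (fun q => f q) < ⊤) :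
    th z (fun q => f q) = Sx c (fun q => f q) +
      th (z - y) (fun q => f ((Sx c (fun q => f q)).toReal + q) - y) := by
  set S := Sx c (fun q => f q) with hS
  have h0 : 0 ≤ S.toReal := ENNReal.toReal_nonneg
  have hSr : ENNReal.ofReal S.toReal = S := ENNReal.ofReal_toReal hT.ne
  apply le_antisymm
  · unfold th
    rw [ENNReal.add_iInf]
    refine le_iInf fun q => ?_
    split_ifs with hq
    · have hq0 : (0 : ℝ) ≤ q := NNRat.cast_nonneg q
      have h1 := th_le_of_lt hf (x := z) (t := S.toReal + q) (by linarith) (by linarith)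
      rwa [ENNReal.ofReal_add h0 hq0, hSr] at h1
    · simp
  · unfold th
    refine le_iInf fun q => ?_
    split_ifs with hq
    · have hq0 : (0 : ℝ) ≤ q := NNRat.cast_nonneg q
      have h1 : S ≤ ENNReal.ofReal q := by
        refine iSup_le fun n => th_le ?_
        have : (0 : ℝ) < 1 / ((n : ℝ) + 1) := by positivity
        linarith
      have h2 : S.toReal ≤ q := ENNReal.toReal_le_of_le_ofReal hq0 h1
      have h3 := th_le_of_lt (cad_shift hf h0 y) (x := z - y) (t := q - S.toReal) (by linarith)
        (by simp only [add_sub_cancel]; linarith)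
      calc S + _ ≤ S + ENNReal.ofReal (q - S.toReal) := by gcongr; exact h3
        _ = ENNReal.ofReal S.toReal + ENNReal.ofReal (q - S.toReal) := by rw [hSr]
        _ = ENNReal.ofReal q := by rw [← ENNReal.ofReal_add h0 (by linarith)]; congr 1; ring
    · exact le_top

lemma Sx_decomp {f : ℝ → ℝ} (hf : IsCadlag f) {c b y : ℝ} (hcb : c < b)
    (hT : Sx c (fun q => f q) < ⊤) :
    Sx b (fun q => f q) = Sx c (fun q => f q) +
      Sx (b - y) (fun q => f ((Sx c (fun q => f q)).toReal + q) - y) := by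
  obtain ⟨N, hN⟩ := exists_nat_one_div_lt (sub_pos.2 hcb)
  conv_lhs => unfold Sx
  conv_rhs => rw [show ∀ w, Sx (b - y) w = ⨆ n : ℕ, th (b - y - 1 / ((n : ℝ) + 1)) w from
    fun w => rfl]
  rw [← (th_seq_mono b _).iSup_nat_add N, ← (th_seq_mono (b - y) _).iSup_nat_add N, ENNReal.add_iSup]
  refine iSup_congr fun n => ?_
  have h1 : (1 : ℝ) / (((n + N : ℕ) : ℝ) + 1) ≤ 1 / ((N : ℝ) + 1) := by
    apply one_div_le_one_div_of_le (by positivity)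
    push_cast
    have : (0 : ℝ) ≤ n := Nat.cast_nonneg n
    linarith
  rw [th_decomp hf (y := y) (show c ≤ b - 1 / (((n + N : ℕ) : ℝ) + 1) by linarith) hT]
  rw [sub_right_comm]

lemma meas_th : Measurable (fun p : ℝ × (ℚ≥0 → ℝ) => th p.1 p.2) := by
  unfold th
  refine Measurable.iInf fun q => ?_
  refine Measurable.ite ?_ measurable_const measurable_const
  exact measurableSet_lt measurable_fst ((measurable_pi_apply q).comp measurable_snd)

lemma meas_Sx : Measurable (fun p : ℝ × (ℚ≥0 → ℝ) => Sx p.1 p.2) := by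
  unfold Sx
  refine Measurable.iSup fun n => ?_
  exact meas_th.comp ((measurable_fst.sub_const _).prodMk measurable_snd)

lemma meas_dy_path {S : ℝ × (ℚ≥0 → ℝ) → ℝ≥0∞} (hS : Measurable S) (k : ℕ) :
    Measurable (fun p : ℝ × (ℚ≥0 → ℝ) => p.2 (dy k (S p).toReal)) := by
  have hN : Measurable (fun p => ⌊(S p).toReal * ((k : ℝ) + 1)⌋₊) :=
    Nat.measurable_floor.comp (hS.ennreal_toReal.mul_const _)
  have hZ : ∀ n : ℕ, Measurable
      (fun p : ℝ × (ℚ≥0 → ℝ) => p.2 (((n : ℚ≥0) + 1) / ((k : ℚ≥0) + 1))) :=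
    fun n => (measurable_pi_apply _).comp measurable_snd
  have h := meas_nat_comp hZ hN
  simp only [dy]
  exact h

lemma meas_good (b r : ℝ) : MeasurableSet {p : ℝ × (ℚ≥0 → ℝ) | Sx (b - p.1) p.2 < ⊤ →
    Tendsto (fun k => p.1 + p.2 (dy k (Sx (b - p.1) p.2).toReal)) atTop (𝓝 r)} := by
  have hS : Measurable (fun p : ℝ × (ℚ≥0 → ℝ) => Sx (b - p.1) p.2) := by
    have hg : Measurable (fun p : ℝ × (ℚ≥0 → ℝ) => (b - p.1, p.2)) :=
      (measurable_fst.const_sub b).prodMk measurable_snd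
    have h0 := meas_Sx.comp hg
    simp only [Function.comp_def] at h0
    exact h0
  have h1 : MeasurableSet {p : ℝ × (ℚ≥0 → ℝ) | Sx (b - p.1) p.2 < ⊤} := hS measurableSet_Iio
  have h2 : MeasurableSet {p : ℝ × (ℚ≥0 → ℝ) | Tendsto
      (fun k => p.1 + p.2 (dy k (Sx (b - p.1) p.2).toReal)) atTop (𝓝 r)} := by
    have h3 : ∀ k : ℕ, Measurable
        (fun p : ℝ × (ℚ≥0 → ℝ) => p.1 + p.2 (dy k (Sx (b - p.1) p.2).toReal)) :=
      fun k => measurable_fst.add (meas_dy_path hS k)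
    exact measurableSet_tendsto (l := atTop)
      (f := fun (k : ℕ) (p : ℝ × (ℚ≥0 → ℝ)) => p.1 + p.2 (dy k (Sx (b - p.1) p.2).toReal))
      (𝓝 r) h3
  exact MeasurableSet.imp h1 h2

lemma Q_iff (hX : IsLevy P F X) (x r : ℝ) : Qfun P X x ({r}ᶜ) = 0 ↔
    ∀ᵐ ω ∂P, Sx x (fun q => X q ω) < ⊤ → X (Sx x (fun q => X q ω)).toReal ω = r := by
  have h1 : Qfun P X x ({r}ᶜ) = 0 ↔ ∀ᵐ ω ∂P, hitT X x ω < ⊤ → stopVal X x ω = r := by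
    rw [ae_iff]
    unfold Qfun
    have : {ω | stopVal X x ω ∈ ({r}ᶜ : Set ℝ)} ∩ {ω | hitT X x ω < ⊤}
        = {ω | ¬(hitT X x ω < ⊤ → stopVal X x ω = r)} := by
      ext ω
      simp only [mem_inter_iff, mem_ofPred_eq, mem_compl_iff, mem_singleton_iff]
      tauto
    rw [this]
  rw [h1]
  refine eventually_congr ?_
  filter_upwards [hit_eq hX x] with ω hω
  rw [stopVal, hω.1]

end Helpers

/-- If `b ∈ 𝒜` and `c ∈ (0,b)`, then either `c ∈ 𝒜` or `(0, b−c] ∩ 𝒜 ≠ ∅`,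
where `𝒜 = {x : Q^x is carried by a singleton}`. -/
theorem singleton_carrier_descent {Ω : Type*} {m0 : MeasurableSpace Ω}
    (P : Measure Ω) (F : MeasureTheory.Filtration ℝ m0) (X : ℝ → Ω → ℝ)
    (hX : IsLevy P F X)
    (b c : ℝ) (hb : b ∈ {x : ℝ | ∃ r : ℝ, Qfun P X x ({r}ᶜ) = 0})
    (hc : 0 < c) (hcb : c < b) :
    c ∈ {x : ℝ | ∃ r : ℝ, Qfun P X x ({r}ᶜ) = 0} ∨
    ∃ d ∈ Set.Ioc (0 : ℝ) (b - c), d ∈ {x : ℝ | ∃ r : ℝ, Qfun P X x ({r}ᶜ) = 0} := by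
  have := hX.isProb
  obtain ⟨r, hr⟩ := hb
  rw [Q_iff hX] at hr
  set T : Ω → ℝ≥0∞ := fun ω => Sx c (fun q => X q ω) with hTdef
  have hT : IsOpt F T := Sx_opt hX c
  by_cases hpos : P {ω | T ω < ⊤} = 0
  · left
    refine ⟨0, (Q_iff hX c 0).2 ?_⟩
    have : ∀ᵐ ω ∂P, ¬ T ω < ⊤ := by rw [ae_iff]; simpa only [not_not] using hpos
    filter_upwards [this] with ω h1 h2
    exact absurd h2 h1
  rw [or_iff_not_imp_right]
  intro hno
  refine ⟨r, (Q_iff hX c r).2 ?_⟩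
  obtain ⟨hind, hlaw⟩ := path_law hX hT hpos
  have hprob : IsProbabilityMeasure (P[|{ω | T ω < ⊤}]) := cond_isProbabilityMeasure hpos
  have hac : P[|{ω | T ω < ⊤}] ≪ P := cond_absolutelyContinuous
  have hTmeas : MeasurableSet {ω | T ω < ⊤} := hT.meas measurableSet_Iio
  have hfinμ : ∀ᵐ ω ∂(P[|{ω | T ω < ⊤}]), T ω < ⊤ := ae_cond_mem hTmeas
  have hXT : AEMeasurable (fun ω => X (T ω).toReal ω) (P[|{ω | T ω < ⊤}]) :=
    (aemeas_stop0 hX hT.meas).mono_ac hac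
  have hY : AEMeasurable (fun ω (q : ℚ≥0) => X ((T ω).toReal + q) ω - X (T ω).toReal ω)
      (P[|{ω | T ω < ⊤}]) :=
    aemeasurable_pi_lambda _ fun q =>
      ((aemeas_stop hX hT.meas (NNRat.cast_nonneg q)).mono_ac hac).sub hXT
  have hgood : ∀ᵐ ω ∂(P[|{ω | T ω < ⊤}]),
      ((X (T ω).toReal ω, fun (q : ℚ≥0) => X ((T ω).toReal + q) ω - X (T ω).toReal ω) :
        ℝ × (ℚ≥0 → ℝ)) ∈
      {p : ℝ × (ℚ≥0 → ℝ) | Sx (b - p.1) p.2 < ⊤ →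
        Tendsto (fun k => p.1 + p.2 (dy k (Sx (b - p.1) p.2).toReal)) atTop (𝓝 r)} := by
    filter_upwards [hac.ae_le hX.cadlag, hac.ae_le hr, hfinμ] with ω hω hrω hfin
    intro hS
    have hd := Sx_decomp hω (y := X (T ω).toReal ω) hcb hfin
    have h1 : Sx b (fun q => X q ω) < ⊤ := by
      rw [hd]; exact ENNReal.add_lt_top.2 ⟨hfin, hS⟩
    have h2 := hrω h1
    rw [hd, ENNReal.toReal_add hfin.ne hS.ne] at h2
    have h3 := cad_dy0 (cad_shift hω (ENNReal.toReal_nonneg (a := T ω)) (X (T ω).toReal ω))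
      (t := (Sx (b - X (T ω).toReal ω)
        (fun q => X ((T ω).toReal + q) ω - X (T ω).toReal ω)).toReal) ENNReal.toReal_nonneg
    have h4 := h3.const_add (X (T ω).toReal ω)
    simp only [add_sub_cancel] at h4 ⊢
    rw [← h2]
    exact h4
  have hgood2 := (ae_map_iff (hXT.prodMk hY) (meas_good b r)).2 hgood
  rw [(indepFun_iff_map_prod_eq_prod_map_map hXT hY).1 hind, hlaw] at hgood2
  have hZm : AEMeasurable (fun ω (q : ℚ≥0) => X q ω) P :=
    aemeasurable_pi_lambda _ fun q => (levy_meas hX _).aemeasurable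
  have hg2 := ae_of_ae_map hXT (Measure.ae_ae_of_ae_prod hgood2)
  have hge : ∀ᵐ ω ∂(P[|{ω | T ω < ⊤}]), b ≤ X (T ω).toReal ω := by
    filter_upwards [hg2, hfinμ, hac.ae_le (hit_eq hX c)] with ω h1 hfin h2
    by_contra hlt
    push Not at hlt
    have hcy : c ≤ X (T ω).toReal ω := h2.2 hfin
    refine hno ⟨b - X (T ω).toReal ω, ⟨by linarith, by linarith⟩, r - X (T ω).toReal ω, ?_⟩
    rw [Q_iff hX]
    have h3 := ae_of_ae_map hZm h1
    filter_upwards [h3, hX.cadlag] with ω' h4 hω' hS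
    have h5 := h4 hS
    have h6 := (cad_dy0 hω' (t := (Sx (b - X (T ω).toReal ω) (fun q => X q ω')).toReal)
      ENNReal.toReal_nonneg).const_add (X (T ω).toReal ω)
    have h7 := tendsto_nhds_unique h5 h6
    linarith
  have hge' : ∀ᵐ ω ∂P, T ω < ⊤ → b ≤ X (T ω).toReal ω := by
    refine (ae_restrict_iff' hTmeas).1 ?_
    have : P.restrict {ω | T ω < ⊤} ≪ P[|{ω | T ω < ⊤}] := by
      unfold ProbabilityTheory.cond
      exact Measure.absolutelyContinuous_smul (by simp [measure_ne_top])
    exact this.ae_le hge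
  filter_upwards [hge', hX.cadlag, hr] with ω h1 hω hrω hfin
  have h2 : b ≤ X (T ω).toReal ω := h1 hfin
  have hd := Sx_decomp hω (y := X (T ω).toReal ω) hcb hfin
  have h3 : Sx (b - X (T ω).toReal ω) (fun q => X ((T ω).toReal + q) ω - X (T ω).toReal ω)
      ≤ ENNReal.ofReal 0 :=
    Sx_le (cad_shift hω (ENNReal.toReal_nonneg (a := T ω)) (X (T ω).toReal ω)) le_rfl
      (by simp only [add_zero]; linarith)
  rw [ENNReal.ofReal_zero, nonpos_iff_eq_zero] at h3
  have h4 : Sx b (fun q => X q ω) = T ω := by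
    rw [hd]; simp only [hTdef] at h3 ⊢; rw [h3, add_zero]
  rw [h4] at hrω
  exact hrω hfin
end

section
/- Let X be a real-valued Lévy process on a filtered probability space satisfying the usual conditions, with Q^x(B) := P({X(T_x) ∈ B} ∩ {T_x < ∞}) for Borel B ⊆ ℝ. Suppose b' > 0 satisfies P(T_{b'} < ∞) > 0 and Q^{b'} is carried by the singleton {f(b')} (so Q^{b'} = P(T_{b'} < ∞)·δ_{f(b')}). Then for every c' ∈ (0, b'], the measure Q^{c'} is carried by the set [c', b') ∪ {f(b')}. -/
open MeasureTheory ProbabilityTheory Filter Set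
open scoped ENNReal Topology

/-- If `b' > 0`, `P(T_{b'} < ∞) > 0` and `Q^{b'}` is carried by `{f(b')}`, then for
every `c' ∈ (0, b']` the measure `Q^{c'}` is carried by `[c', b') ∪ {f(b')}`. -/
theorem Qfun_carried_by_Ico_union_singleton {Ω : Type*} {m0 : MeasurableSpace Ω}
    (P : Measure Ω) (F : MeasureTheory.Filtration ℝ m0) (X : ℝ → Ω → ℝ)
    (hX : IsLevy P F X)
    (b' : ℝ) (hb' : 0 < b') (hpos : 0 < P {ω | hitT X b' ω < ⊤})
    (fb' : ℝ) (hcarr : Qfun P X b' ({fb'}ᶜ) = 0)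
    (c' : ℝ) (hc' : c' ∈ Set.Ioc (0 : ℝ) b') :
    Qfun P X c' ((Set.Ico c' b' ∪ {fb'})ᶜ) = 0 := by
  have hkey : ∀ᵐ ω ∂P, ¬ (stopVal X b' ω ∈ ({fb'}ᶜ : Set ℝ) ∧ hitT X b' ω < ⊤) := by
    rw [ae_iff]
    simp only [not_not]
    exact hcarr
  have hgoal : ∀ᵐ ω ∂P,
      ¬ (stopVal X c' ω ∈ ((Set.Ico c' b' ∪ {fb'})ᶜ : Set ℝ) ∧ hitT X c' ω < ⊤) := by
    filter_upwards [hkey, hX.cadlag] with ω h1 h2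
    rintro ⟨h3, h4⟩
    have hc : c' ≤ stopVal X c' ω := by
      by_contra hlt
      rw [not_le] at hlt
      have hcont := h2.1 (hitT X c' ω).toReal ENNReal.toReal_nonneg
      have hev : ∀ᶠ t in 𝓝[≥] (hitT X c' ω).toReal, X t ω < c' :=
        hcont.eventually (gt_mem_nhds hlt)
      obtain ⟨u, hu, hsub⟩ := (mem_nhdsGE_iff_exists_Ico_subset).1 hev
      have hlt2 : hitT X c' ω < ENNReal.ofReal u :=
        (ENNReal.lt_ofReal_iff_toReal_lt h4.ne).2 hu
      obtain ⟨_, ⟨t, ⟨ht0, ht⟩, rfl⟩, htu⟩ := sInf_lt_iff.1 hlt2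
      have hle : hitT X c' ω ≤ ENNReal.ofReal t := sInf_le ⟨t, ⟨ht0, ht⟩, rfl⟩
      have h5 : (hitT X c' ω).toReal ≤ t := ENNReal.toReal_le_of_le_ofReal ht0 hle
      have h6 : t < u := (ENNReal.ofReal_lt_ofReal_iff_of_nonneg ht0).1 htu
      have h7 : X t ω < c' := hsub ⟨h5, h6⟩
      exact absurd ht (not_le.2 h7)
    simp only [Set.mem_compl_iff, Set.mem_union, Set.mem_Ico, Set.mem_singleton_iff, not_or,
      not_and, not_lt] at h3
    have hb : b' ≤ stopVal X c' ω := h3.1 hc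
    have heq : hitT X b' ω = hitT X c' ω := by
      apply le_antisymm
      · refine sInf_le ⟨(hitT X c' ω).toReal, ⟨ENNReal.toReal_nonneg, hb⟩, ?_⟩
        exact ENNReal.ofReal_toReal h4.ne
      · apply sInf_le_sInf
        apply Set.image_mono
        rintro t ⟨ht0, ht⟩
        exact ⟨ht0, hc'.2.trans ht⟩
    apply h1
    refine ⟨?_, heq ▸ h4⟩
    unfold stopVal at h3 ⊢
    rw [heq]
    exact h3.2
  rw [ae_iff] at hgoal
  simp only [not_not] at hgoal
  exact hgoal
end

section
/- Let X be a real-valued Lévy process on a filtered probability space satisfying the usual conditions, with Q^x(B) := P({X(T_x) ∈ B} ∩ {T_x < ∞}) for Borel B ⊆ ℝ and 𝒜 := {x ∈ ℝ : Q^x is carried by a singleton}. Suppose x > 0 satisfies P(T_x < ∞) > 0 and Q^x = P(T_x < ∞)·δ_{f(x)} for a (necessarily unique) f(x), which then satisfies f(x) ≥ x. Then ∪_{n∈ℕ₀} [x + n·f(x), (n+1)·f(x)] ⊆ 𝒜. -/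
open MeasureTheory ProbabilityTheory Filter Set
open scoped ENNReal Topology

namespace LadderAux

noncomputable def tm (p : ℕ × ℕ) : ℝ := (p.2 : ℝ) / 2 ^ p.1

lemma tm_nonneg (p : ℕ × ℕ) : 0 ≤ tm p := by unfold tm; positivity

noncomputable def opT (w : ℕ × ℕ → ℝ) (y : ℝ) : ℝ≥0∞ :=
  ⨅ p : ℕ × ℕ, ⨅ (_ : y < w p), ENNReal.ofReal (tm p)

noncomputable def stT (w : ℕ × ℕ → ℝ) (x : ℝ) : ℝ≥0∞ :=
  ⨆ k : ℕ, opT w (x - 1 / ((k : ℝ) + 1))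

noncomputable def samp (g : ℝ → ℝ) : ℕ × ℕ → ℝ := fun p => g (tm p)

noncomputable def hitP (g : ℝ → ℝ) (x : ℝ) : ℝ≥0∞ :=
  sInf ((fun t : ℝ => ENNReal.ofReal t) '' {t : ℝ | 0 ≤ t ∧ x ≤ g t})

def RC (g : ℝ → ℝ) : Prop := ∀ t : ℝ, 0 ≤ t → ContinuousWithinAt g (Set.Ici t) t

noncomputable def upI (N : ℕ) (τ : ℝ) : ℕ × ℕ := (N, ⌊τ * 2 ^ N⌋₊ + 1)

lemma upI_gt (N : ℕ) (τ : ℝ) : τ < tm (upI N τ) := by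
  unfold tm upI
  rw [lt_div_iff₀ (by positivity)]
  push_cast
  exact Nat.lt_floor_add_one _

lemma upI_le (N : ℕ) {τ : ℝ} (h : 0 ≤ τ) : tm (upI N τ) ≤ τ + (1 / 2) ^ N := by
  unfold tm upI
  rw [div_le_iff₀ (by positivity)]
  push_cast
  have := Nat.floor_le (a := τ * 2 ^ N) (by positivity)
  have h2 : (1 / 2 : ℝ) ^ N * 2 ^ N = 1 := by rw [← mul_pow]; norm_num
  rw [add_mul, h2]; linarith

lemma upI_tendsto {τ : ℝ} (h : 0 ≤ τ) : Tendsto (fun N => tm (upI N τ)) atTop (𝓝 τ) := by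
  refine tendsto_of_tendsto_of_tendsto_of_le_of_le tendsto_const_nhds ?_
    (fun N => (upI_gt N τ).le) (fun N => upI_le N h)
  have := tendsto_pow_atTop_nhds_zero_of_lt_one (r := (1 / 2 : ℝ)) (by norm_num) (by norm_num)
  simpa using this.const_add τ

lemma upI_tendsto' {τ : ℝ} (h : 0 ≤ τ) :
    Tendsto (fun N => tm (upI N τ)) atTop (𝓝[Set.Ici τ] τ) :=
  tendsto_nhdsWithin_iff.2 ⟨upI_tendsto h, Eventually.of_forall fun N => (upI_gt N τ).le⟩

lemma RC.samp_tendsto {g : ℝ → ℝ} (hg : RC g) {τ : ℝ} (h : 0 ≤ τ) :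
    Tendsto (fun N => samp g (upI N τ)) atTop (𝓝 (g τ)) :=
  (hg τ h).tendsto.comp (upI_tendsto' h)

lemma RC.exists_lt {g : ℝ → ℝ} (hg : RC g) {τ y : ℝ} (h : 0 ≤ τ) (hy : g τ < y) :
    ∃ δ > 0, ∀ s, τ ≤ s → s < τ + δ → g s < y := by
  have := (hg τ h).tendsto.eventually (gt_mem_nhds hy)
  rw [eventually_nhdsWithin_iff, Metric.eventually_nhds_iff] at this
  obtain ⟨δ, hδ, H⟩ := this
  refine ⟨δ, hδ, fun s h1 h2 => H ?_ h1⟩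
  rw [Real.dist_eq, abs_lt]; constructor <;> linarith

lemma le_opT {g : ℝ → ℝ} (hg : RC g) {y : ℝ} (h : opT (samp g) y < ⊤) :
    y ≤ g (opT (samp g) y).toReal := by
  by_contra hlt
  push Not at hlt
  obtain ⟨δ, hδ, H⟩ := hg.exists_lt ENNReal.toReal_nonneg hlt
  set τ := (opT (samp g) y).toReal with hτ
  have h1 : opT (samp g) y < ENNReal.ofReal (τ + δ) := by
    rw [← ENNReal.ofReal_toReal h.ne, ← hτ]
    exact (ENNReal.ofReal_lt_ofReal_iff (by positivity)).2 (by linarith)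
  have h2 := h1
  unfold opT at h2
  simp only [iInf_lt_iff] at h2
  obtain ⟨p, hp, hlt2⟩ := h2
  have h3 : tm p < τ + δ := (ENNReal.ofReal_lt_ofReal_iff (by positivity)).1 hlt2
  have h4 : τ ≤ tm p := by
    apply ENNReal.toReal_le_of_le_ofReal (tm_nonneg p)
    exact iInf₂_le p hp
  exact absurd (H _ h4 h3) (not_lt.2 hp.le)

lemma le_hitP {g : ℝ → ℝ} (hg : RC g) {y : ℝ} (h : hitP g y < ⊤) :
    y ≤ g (hitP g y).toReal := by
  by_contra hlt
  push Not at hlt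
  obtain ⟨δ, hδ, H⟩ := hg.exists_lt ENNReal.toReal_nonneg hlt
  set τ := (hitP g y).toReal with hτ
  have h1 : hitP g y < ENNReal.ofReal (τ + δ) := by
    rw [← ENNReal.ofReal_toReal h.ne, ← hτ]
    exact (ENNReal.ofReal_lt_ofReal_iff (by positivity)).2 (by linarith)
  have h2 := h1
  unfold hitP at h2
  rw [sInf_lt_iff] at h2
  obtain ⟨_, ⟨t, ⟨ht0, hty⟩, rfl⟩, hlt2⟩ := h2
  have h3 : t < τ + δ := (ENNReal.ofReal_lt_ofReal_iff (by positivity)).1 hlt2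
  have h4 : τ ≤ t := by
    apply ENNReal.toReal_le_of_le_ofReal ht0
    exact sInf_le ⟨t, ⟨ht0, hty⟩, rfl⟩
  exact absurd (H _ h4 h3) (not_lt.2 hty)

lemma opT_le {g : ℝ → ℝ} (hg : RC g) {y t : ℝ} (ht : 0 ≤ t) (h : y < g t) :
    opT (samp g) y ≤ ENNReal.ofReal t := by
  have h1 : ∀ᶠ N in atTop, y < samp g (upI N t) :=
    (hg.samp_tendsto ht).eventually (lt_mem_nhds h)
  refine ge_of_tendsto ((ENNReal.continuous_ofReal.tendsto t).comp (upI_tendsto ht)) ?_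
  filter_upwards [h1] with N hN
  exact iInf₂_le (f := fun (p : ℕ × ℕ) (_ : y < samp g p) => ENNReal.ofReal (tm p)) _ hN

lemma stT_le {g : ℝ → ℝ} (hg : RC g) {y t : ℝ} (ht : 0 ≤ t) (h : y ≤ g t) :
    stT (samp g) y ≤ ENNReal.ofReal t := by
  refine iSup_le fun k => opT_le hg ht ?_
  have : (0 : ℝ) < 1 / ((k : ℝ) + 1) := by positivity
  linarith

lemma stT_le_hitP {g : ℝ → ℝ} (hg : RC g) {y : ℝ} :
    stT (samp g) y ≤ hitP g y := by
  refine le_sInf ?_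
  rintro _ ⟨t, ⟨ht, hy⟩, rfl⟩
  exact stT_le hg ht hy

lemma hitP_le {g : ℝ → ℝ} {y t : ℝ} (ht : 0 ≤ t) (h : y ≤ g t) :
    hitP g y ≤ ENNReal.ofReal t := sInf_le ⟨t, ⟨ht, h⟩, rfl⟩

lemma hitP_eq {g : ℝ → ℝ} (hg : RC g) {y : ℝ} (h : stT (samp g) y < ⊤)
    (h2 : y ≤ g (stT (samp g) y).toReal) : hitP g y = stT (samp g) y := by
  refine le_antisymm ?_ (stT_le_hitP hg)
  refine (hitP_le ENNReal.toReal_nonneg h2).trans ?_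
  rw [ENNReal.ofReal_toReal h.ne]

/-- the bad set of sampled paths -/
def good (z f : ℝ) : Set (ℕ × ℕ → ℝ) :=
  {w | stT w z < ⊤ → Tendsto (fun N => w (upI N (stT w z).toReal)) atTop (𝓝 f)}

lemma good_iff {g : ℝ → ℝ} (hg : RC g) {z f : ℝ} :
    samp g ∈ good z f ↔ (stT (samp g) z < ⊤ → g (stT (samp g) z).toReal = f) := by
  have h := hg.samp_tendsto (τ := (stT (samp g) z).toReal) ENNReal.toReal_nonneg
  constructor
  · intro H h1
    exact tendsto_nhds_unique h (H h1)
  · intro H h1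
    have := H h1
    rw [this] at h
    exact h

lemma good_hit {g : ℝ → ℝ} (hg : RC g) {z f : ℝ} (hzf : z ≤ f) (h : samp g ∈ good z f)
    (hfin : hitP g z < ⊤) : g (hitP g z).toReal = f := by
  have h1 := lt_of_le_of_lt (stT_le_hitP hg) hfin
  have h2 := (good_iff hg).1 h h1
  rw [hitP_eq hg h1 (by rw [h2]; exact hzf)]
  exact h2

/-- concatenation -/
lemma hit_concat {g : ℝ → ℝ} (hg : RC g) {a z f : ℝ} (hz : 0 ≤ z) (hzf : z ≤ f)
    (ha : hitP g a < ⊤ → g (hitP g a).toReal = a)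
    (hgood : hitP g a < ⊤ →
      samp (fun s => g ((hitP g a).toReal + s) - g (hitP g a).toReal) ∈ good z f)
    (hfin : hitP g (a + z) < ⊤) : g (hitP g (a + z)).toReal = a + f := by
  have hle : hitP g a ≤ hitP g (a + z) := by
    refine sInf_le_sInf (image_mono ?_)
    rintro t ⟨h0, h1⟩
    exact ⟨h0, by linarith⟩
  have hfa := lt_of_le_of_lt hle hfin
  have ha := ha hfa
  have hgood := hgood hfa
  rw [ha] at hgood
  set T := (hitP g a).toReal with hT
  have hT0 : 0 ≤ T := ENNReal.toReal_nonneg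
  have hg' : RC (fun s => g (T + s) - a) := by
    intro t ht
    have h1 := hg (T + t) (by linarith)
    refine ContinuousWithinAt.sub ?_ continuousWithinAt_const
    refine ContinuousWithinAt.comp (t := Ici (T + t)) h1 (by fun_prop) ?_
    intro s hs
    simp only [mem_Ici] at hs ⊢
    linarith
  have hTT : T ≤ (hitP g (a + z)).toReal := ENNReal.toReal_mono hfin.ne hle
  -- relation of the hitting times
  have hrel : hitP g (a + z) = hitP g a + hitP (fun s => g (T + s) - a) z := by
    rw [← ENNReal.ofReal_toReal hfa.ne, ← hT]
    refine le_antisymm ?_ ?_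
    · rw [← tsub_le_iff_left]
      refine le_sInf ?_
      rintro _ ⟨t, ⟨ht, hy⟩, rfl⟩
      rw [tsub_le_iff_left]
      simp only
      rw [← ENNReal.ofReal_add hT0 ht]
      exact hitP_le (by linarith) (by linarith)
    · refine le_sInf ?_
      rintro _ ⟨t, ⟨ht, hy⟩, rfl⟩
      have h1 : T ≤ t := by
        have := hitP_le (g := g) (y := a) ht (by linarith)
        exact ENNReal.toReal_le_of_le_ofReal ht this
      have h2 : hitP (fun s => g (T + s) - a) z ≤ ENNReal.ofReal (t - T) := by
        refine hitP_le (by linarith) ?_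
        simp only [add_sub_cancel]; linarith
      calc _ ≤ ENNReal.ofReal T + ENNReal.ofReal (t - T) := by gcongr
        _ = _ := by rw [← ENNReal.ofReal_add hT0 (by linarith)]; simp
  have hfin' : hitP (fun s => g (T + s) - a) z < ⊤ := by
    rw [hrel] at hfin
    exact (ENNReal.add_lt_top.1 hfin).2
  have key := good_hit hg' hzf hgood hfin'
  rw [hrel, ENNReal.toReal_add hfa.ne hfin'.ne, ← hT]
  linarith

lemma measurable_opT (y : ℝ) : Measurable (fun w => opT w y) := by
  unfold opT
  refine Measurable.iInf fun p => ?_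
  have : (fun w : ℕ × ℕ → ℝ => ⨅ (_ : y < w p), ENNReal.ofReal (tm p)) =
      fun w => if y < w p then ENNReal.ofReal (tm p) else ⊤ := by
    ext w; split_ifs with h <;> simp [h]
  rw [this]
  refine Measurable.ite ?_ measurable_const measurable_const
  exact measurableSet_lt measurable_const (measurable_pi_apply p)

lemma measurable_stT (y : ℝ) : Measurable (fun w => stT w y) :=
  Measurable.iSup fun _ => measurable_opT _

lemma measurableSet_good (z f : ℝ) : MeasurableSet (good z f) := by
  have h1 : MeasurableSet {w : ℕ × ℕ → ℝ | stT w z < ⊤} :=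
    measurableSet_lt (measurable_stT z) measurable_const
  have h2 : MeasurableSet {w : ℕ × ℕ → ℝ |
      Tendsto (fun N => w (upI N (stT w z).toReal)) atTop (𝓝 f)} := by
    refine measurableSet_tendsto _ fun N => ?_
    have h3 : Measurable (fun q : (ℕ × ℕ → ℝ) × ℕ => q.1 (N, q.2 + 1)) :=
      measurable_from_prod_countable_left fun y => measurable_pi_apply (N, y + 1)
    have h4 : Measurable (fun w : ℕ × ℕ → ℝ => (w, ⌊(stT w z).toReal * 2 ^ N⌋₊)) :=
      measurable_id.prodMk (Nat.measurable_floor.comp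
        ((measurable_stT z).ennreal_toReal.mul_const _))
    exact h3.comp h4
  have : good z f = {w : ℕ × ℕ → ℝ | stT w z < ⊤}ᶜ ∪ {w : ℕ × ℕ → ℝ |
      Tendsto (fun N => w (upI N (stT w z).toReal)) atTop (𝓝 f)} := by
    ext w; simp only [good, mem_ofPred_eq, mem_union, mem_compl_iff]; tauto
  rw [this]
  exact h1.compl.union h2

section
variable {Ω : Type*} {m0 : MeasurableSpace Ω} {P : Measure Ω}
  {F : MeasureTheory.Filtration ℝ m0} {X : ℝ → Ω → ℝ}

lemma meas_X (hX : IsLevy P F X) (t : ℝ) : Measurable (X t) :=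
  (hX.adapted t).mono (F.le t) le_rfl

noncomputable def inc (X : ℝ → Ω → ℝ) (s h : ℝ) (j : ℕ) (ω : Ω) : ℝ :=
  X (s + ((j : ℝ) + 1) * h) ω - X (s + (j : ℝ) * h) ω

lemma fdd (hX : IsLevy P F X) {s h : ℝ} (hs : 0 ≤ s) (hh : 0 ≤ h) {A : Set Ω}
    (hA : MeasurableSet[F s] A) {B : ℕ → Set ℝ} (hB : ∀ j, MeasurableSet (B j)) (n : ℕ) :
    MeasurableSet[F (s + (n : ℝ) * h)] (A ∩ {ω | ∀ j < n, inc X s h j ω ∈ B j}) ∧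
    P (A ∩ {ω | ∀ j < n, inc X s h j ω ∈ B j}) =
      P A * ∏ j ∈ Finset.range n, (P.map (X h)) (B j) := by
  induction n with
  | zero =>
    have e : s + ((0 : ℕ) : ℝ) * h = s := by simp
    rw [e]
    simpa using hA
  | succ n ih =>
    have hset : (A ∩ {ω | ∀ j < n + 1, inc X s h j ω ∈ B j}) =
        (inc X s h n ⁻¹' B n) ∩ (A ∩ {ω | ∀ j < n, inc X s h j ω ∈ B j}) := by
      ext ω
      simp only [mem_inter_iff, mem_ofPred_eq, mem_preimage, Nat.lt_succ_iff_lt_or_eq]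
      constructor
      · rintro ⟨h1, h2⟩
        exact ⟨h2 n (Or.inr rfl), h1, fun j hj => h2 j (Or.inl hj)⟩
      · rintro ⟨h1, h2, h3⟩
        refine ⟨h2, ?_⟩
        rintro j (hj | rfl)
        · exact h3 j hj
        · exact h1
    have hn : (0 : ℝ) ≤ n * h := by positivity
    have hle : s + (n : ℝ) * h ≤ s + ((n : ℝ) + 1) * h := by linarith
    have hle0 : 0 ≤ s + (n : ℝ) * h := by linarith
    have hm : Measurable[F (s + ((n : ℝ) + 1) * h)] (inc X s h n) :=
      Measurable.sub (hX.adapted _) ((hX.adapted _).mono (F.mono hle) le_rfl)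
    have hcast : s + ((n + 1 : ℕ) : ℝ) * h = s + ((n : ℝ) + 1) * h := by push_cast; ring
    rw [hset, hcast]
    refine ⟨(hm (hB n)).inter (F.mono hle _ ih.1), ?_⟩
    have hind := (Indep_iff _ _ _).1 (hX.indep _ _ hle0 hle) (inc X s h n ⁻¹' B n) _
      ⟨B n, hB n, rfl⟩ ih.1
    rw [hind, ih.2, Finset.prod_range_succ]
    have hst := hX.statInc _ _ hle0 hle
    have he : s + ((n : ℝ) + 1) * h - (s + (n : ℝ) * h) = h := by ring
    rw [he] at hst
    have : P (inc X s h n ⁻¹' B n) = (P.map (X h)) (B n) := by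
      rw [← hst]
      exact (Measure.map_apply (hm.mono (F.le _) le_rfl) (hB n)).symm
    rw [this]
    ring

lemma measurable_inc (hX : IsLevy P F X) (s h : ℝ) : Measurable (fun ω j => inc X s h j ω) :=
  measurable_pi_lambda _ fun _ => (meas_X hX _).sub (meas_X hX _)

lemma inc_law (hX : IsLevy P F X) {s h : ℝ} (hs : 0 ≤ s) (hh : 0 ≤ h) {A : Set Ω}
    (hA : MeasurableSet[F s] A) :
    (P.restrict A).map (fun ω j => inc X s h j ω) =
      P A • P.map (fun ω j => inc X 0 h j ω) := by
  have := hX.isProb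
  have : IsProbabilityMeasure (P.map (X h)) :=
    Measure.isProbabilityMeasure_map (meas_X hX h).aemeasurable
  have key : ∀ {s : ℝ} (_ : 0 ≤ s) {A : Set Ω} (_ : MeasurableSet[F s] A) (_ : P A ≠ 0),
      (P[|A]).map (fun ω j => inc X s h j ω) = Measure.infinitePi (fun _ : ℕ => P.map (X h)) := by
    intro s hs A hA h0
    refine Measure.eq_infinitePi _ fun I t ht => ?_
    have hcl : MeasurableSet (Set.pi (I : Set ℕ) t) :=
      MeasurableSet.pi I.countable_toSet fun i _ => ht i
    rw [Measure.map_apply (measurable_inc hX s h) hcl, cond_apply (F.le s _ hA)]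
    obtain ⟨n, hn⟩ := I.exists_nat_subset_range
    classical
    have h1 := (fdd hX hs hh hA (B := fun j => if j ∈ I then t j else univ)
      (fun j => by split_ifs; exacts [ht j, MeasurableSet.univ]) n).2
    have h2 : (fun ω j => inc X s h j ω) ⁻¹' (Set.pi (I : Set ℕ) t) =
        {ω | ∀ j < n, inc X s h j ω ∈ (fun j => if j ∈ I then t j else univ) j} := by
      ext ω
      simp only [mem_preimage, Set.mem_pi, mem_ofPred_eq, Finset.mem_coe]
      constructor
      · intro H j _
        split_ifs with hj
        · exact H j hj
        · trivial
      · intro H j hj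
        have := H j (Finset.mem_range.1 (hn hj))
        simpa [hj] using this
    rw [h2, h1, ← mul_assoc, ENNReal.inv_mul_cancel h0 (measure_ne_top _ _), one_mul]
    rw [← Finset.prod_subset hn (f := fun j => (P.map (X h)) (if j ∈ I then t j else univ))]
    · exact Finset.prod_congr rfl fun j hj => by simp [hj]
    · intro j _ hj
      simp [hj]
  by_cases h0 : P A = 0
  · simp [h0, Measure.restrict_eq_zero.2 h0]
  · have h1 := key hs hA h0
    have h2 := key le_rfl (A := univ) MeasurableSet.univ (by simp)
    rw [cond_univ] at h2
    rw [h2, ← h1, ProbabilityTheory.cond, Measure.map_smul, smul_smul,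
      ENNReal.mul_inv_cancel h0 (measure_ne_top _ _), one_smul]

noncomputable def shY (X : ℝ → Ω → ℝ) (s : ℝ) (ω : Ω) : ℕ × ℕ → ℝ :=
  samp (fun u => X (s + u) ω - X s ω)

lemma measurable_shY (hX : IsLevy P F X) (s : ℝ) : Measurable (shY X s) :=
  measurable_pi_lambda _ fun _ => (meas_X hX _).sub (meas_X hX _)

lemma sum_inc (s h : ℝ) (ω : Ω) (n : ℕ) :
    ∑ j ∈ Finset.range n, inc X s h j ω = X (s + n * h) ω - X s ω := by
  have := Finset.sum_range_sub (fun j : ℕ => X (s + (j : ℝ) * h) ω) n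
  simp only [Nat.cast_zero, zero_mul, add_zero] at this
  rw [← this]
  refine Finset.sum_congr rfl fun j _ => ?_
  simp [inc]

lemma shY_law (hX : IsLevy P F X) {s : ℝ} (hs : 0 ≤ s) {A : Set Ω}
    (hA : MeasurableSet[F s] A) :
    (P.restrict A).map (shY X s) = P A • P.map (shY X 0) := by
  have := hX.isProb
  have hfm : IsFiniteMeasure (P A • P.map (shY X 0)) :=
    Measure.smul_finite _ (measure_ne_top _ _)
  have hfm2 : ∀ I : Finset (ℕ × ℕ), IsFiniteMeasure ((P A • P.map (shY X 0)).map I.restrict) :=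
    fun I => inferInstance
  refine IsProjectiveLimit.unique (P := fun I => (P A • P.map (shY X 0)).map I.restrict)
    (fun I => ?_) (fun I => rfl)
  set N := I.sup Prod.fst with hN
  let Ψ : (ℕ → ℝ) → (I → ℝ) := fun v p =>
    ∑ j ∈ Finset.range (p.1.2 * 2 ^ (N - p.1.1)), v j
  have hΨ : Measurable Ψ := by
    refine measurable_pi_lambda _ fun p => ?_
    exact Finset.measurable_sum _ fun j _ => measurable_pi_apply j
  have hfac : ∀ s, (fun ω => I.restrict (shY X s ω)) =
      Ψ ∘ (fun ω j => inc X s (1 / 2 ^ N) j ω) := by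
    intro s
    ext ω p
    simp only [Function.comp, Ψ, sum_inc, Finset.restrict, shY, samp]
    have hp : p.1.1 ≤ N := Finset.le_sup (f := Prod.fst) p.2
    have : tm p.1 = ((p.1.2 * 2 ^ (N - p.1.1) : ℕ) : ℝ) * (1 / 2 ^ N) := by
      unfold tm
      push_cast
      have : (2 : ℝ) ^ N = 2 ^ (N - p.1.1) * 2 ^ p.1.1 := by
        rw [← pow_add]; congr 1; omega
      rw [this]; field_simp
    rw [this]
  have e : ∀ s, ∀ μ : Measure Ω, (μ.map (shY X s)).map I.restrict =
      (μ.map (fun ω j => inc X s (1 / 2 ^ N) j ω)).map Ψ := by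
    intro s μ
    rw [Measure.map_map (Finset.measurable_restrict I) (measurable_shY hX s),
      Measure.map_map hΨ (measurable_inc hX s _), ← hfac]
    rfl
  change ((P.restrict A).map (shY X s)).map I.restrict =
    (P A • P.map (shY X 0)).map I.restrict
  rw [e, inc_law hX hs (by positivity) hA, Measure.map_smul, Measure.map_smul, e]

lemma strongMarkov (hX : IsLevy P F X) {T : Ω → ℝ≥0∞} (hTm : Measurable T)
    (hT : ∀ t : ℝ, 0 ≤ t → MeasurableSet[F t] {ω | T ω < ENNReal.ofReal t})
    {C : Set (ℕ × ℕ → ℝ)} (hC : MeasurableSet C) :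
    P ({ω | T ω < ⊤} ∩ {ω | shY X (T ω).toReal ω ∈ C}) =
      P {ω | T ω < ⊤} * P {ω | shY X 0 ω ∈ C} := by
  have := hX.isProb
  set D : Set Ω := {ω | T ω < ⊤} with hD
  have hDm : MeasurableSet D := measurableSet_lt hTm measurable_const
  let J : ℕ → Ω → ℕ := fun m ω => ⌊(T ω).toReal * 2 ^ m⌋₊
  have hJ : ∀ m, Measurable (J m) := fun m =>
    Nat.measurable_floor.comp (hTm.ennreal_toReal.mul_const _)
  let Z : ℕ → Ω → (ℕ × ℕ → ℝ) := fun m ω => shY X (tm (m, J m ω + 1)) ω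
  have hZ : ∀ m, Measurable (Z m) := by
    intro m
    have h3 : Measurable (fun q : Ω × ℕ => shY X (tm (m, q.2 + 1)) q.1) :=
      measurable_from_prod_countable_left fun y => measurable_shY hX (tm (m, y + 1))
    have h4 : Measurable (fun ω : Ω => (ω, J m ω)) := measurable_id.prodMk (hJ m)
    have h5 := Measurable.comp h3 h4
    exact h5
  have hlaw : ∀ m, (P.restrict D).map (Z m) = P D • P.map (shY X 0) := by
    intro m
    ext C hC
    rw [Measure.map_apply (hZ m) hC, Measure.restrict_apply (hZ m hC), Measure.smul_apply,
      smul_eq_mul]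
    have hAj : ∀ j, MeasurableSet[F (tm (m, j + 1))] (D ∩ J m ⁻¹' {j}) := by
      intro j
      have hset : D ∩ J m ⁻¹' {j} = {ω | T ω < ENNReal.ofReal (tm (m, j + 1))} \
          {ω | T ω < ENNReal.ofReal (tm (m, j))} := by
        ext ω
        simp only [mem_inter_iff, mem_preimage, mem_singleton_iff, Set.mem_sdiff, mem_ofPred_eq, hD, J]
        have hh : ∀ i : ℕ, T ω < ⊤ → (T ω < ENNReal.ofReal (tm (m, i)) ↔
            (T ω).toReal * 2 ^ m < i) := by
          intro i hi
          rw [ENNReal.lt_ofReal_iff_toReal_lt hi.ne]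
          unfold tm
          rw [lt_div_iff₀ (by positivity)]
        constructor
        · rintro ⟨h1, h2⟩
          rw [hh _ h1, hh _ h1]
          rw [Nat.floor_eq_iff (by positivity)] at h2
          push_cast
          exact ⟨h2.2, not_lt.2 h2.1⟩
        · rintro ⟨h1, h2⟩
          have h3 : T ω < ⊤ := h1.trans ENNReal.ofReal_lt_top
          rw [hh _ h3] at h1 h2
          refine ⟨h3, ?_⟩
          rw [Nat.floor_eq_iff (by positivity)]
          push_cast at h1
          exact ⟨not_lt.1 h2, h1⟩
      rw [hset]
      refine (hT _ (tm_nonneg _)).diff (F.mono ?_ _ (hT _ (tm_nonneg _)))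
      unfold tm
      gcongr
      simp
    have hpart : Z m ⁻¹' C ∩ D =
        ⋃ j, (shY X (tm (m, j + 1)) ⁻¹' C ∩ (D ∩ J m ⁻¹' {j})) := by
      ext ω
      simp [Z]
    have hDpart : D = ⋃ j, (D ∩ J m ⁻¹' {j}) := by
      ext ω; simp
    have hdisj : Pairwise (Function.onFun Disjoint fun j => D ∩ J m ⁻¹' {j}) := by
      intro i j hij
      refine Set.disjoint_left.2 ?_
      rintro ω ⟨_, h1⟩ ⟨_, h2⟩
      exact hij (h1.symm.trans h2)
    rw [hpart, measure_iUnion]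
    · have : P D = ∑' j, P (D ∩ J m ⁻¹' {j}) := by
        conv_lhs => rw [hDpart]
        exact measure_iUnion hdisj fun j => F.le _ _ (hAj j)
      rw [this, ← ENNReal.tsum_mul_right]
      congr 1; ext j
      have h1 := shY_law hX (tm_nonneg _) (hAj j)
      have h2 := congrArg (fun μ => μ C) h1
      simp only [Measure.smul_apply, smul_eq_mul] at h2
      rw [Measure.map_apply (measurable_shY hX _) hC,
        Measure.restrict_apply (measurable_shY hX _ hC)] at h2
      exact h2
    · intro i j hij
      exact (hdisj hij).mono inter_subset_right inter_subset_right
    · intro j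
      exact (measurable_shY hX _ hC).inter (F.le _ _ (hAj j))
  have hlim : ∀ᵐ ω ∂(P.restrict D), Tendsto (fun m => Z m ω) atTop
      (𝓝 (shY X (T ω).toReal ω)) := by
    filter_upwards [ae_restrict_of_ae hX.cadlag] with ω hω
    have hrc : RC (fun t => X t ω) := hω.1
    have h0 : 0 ≤ (T ω).toReal := ENNReal.toReal_nonneg
    rw [tendsto_pi_nhds]
    intro p
    have hp := tm_nonneg p
    have a1 := (hrc _ h0).tendsto.comp (upI_tendsto' h0)
    have a2 : Tendsto (fun m => tm (upI m (T ω).toReal) + tm p) atTop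
        (𝓝[Ici ((T ω).toReal + tm p)] ((T ω).toReal + tm p)) :=
      tendsto_nhdsWithin_iff.2 ⟨(upI_tendsto h0).add_const _,
        Eventually.of_forall fun N => by
          have := (upI_gt N (T ω).toReal).le
          simp only [mem_Ici]; linarith⟩
    have a3 := (hrc _ (by linarith : 0 ≤ (T ω).toReal + tm p)).tendsto.comp a2
    exact a3.sub a1
  have hae : AEMeasurable (fun ω => shY X (T ω).toReal ω) (P.restrict D) :=
    aemeasurable_of_tendsto_metrizable_ae atTop (fun m => (hZ m).aemeasurable) hlim
  have hfinal : (P.restrict D).map (fun ω => shY X (T ω).toReal ω) = P D • P.map (shY X 0) := by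
    have hfm : IsFiniteMeasure (P D • P.map (shY X 0)) :=
      Measure.smul_finite _ (measure_ne_top _ _)
    refine ext_of_forall_integral_eq_of_IsFiniteMeasure fun φ => ?_
    rw [integral_map hae φ.continuous.aestronglyMeasurable]
    have hc : ∀ m, ∫ ω, φ (Z m ω) ∂(P.restrict D) = ∫ w, φ w ∂(P D • P.map (shY X 0)) := by
      intro m
      rw [← hlaw m, integral_map (hZ m).aemeasurable φ.continuous.aestronglyMeasurable]
    have ht : Tendsto (fun m => ∫ ω, φ (Z m ω) ∂(P.restrict D)) atTop
        (𝓝 (∫ ω, φ (shY X (T ω).toReal ω) ∂(P.restrict D))) := by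
      refine tendsto_integral_of_dominated_convergence (fun _ => ‖φ‖) ?_ (integrable_const _) ?_ ?_
      · intro m
        exact (φ.continuous.measurable.comp (hZ m)).aestronglyMeasurable
      · intro m
        exact Eventually.of_forall fun ω => φ.norm_coe_le_norm _
      · filter_upwards [hlim] with ω hω
        exact (φ.continuous.tendsto _).comp hω
    simp only [hc] at ht
    exact (tendsto_nhds_unique ht tendsto_const_nhds).symm ▸ rfl
  have h2 := congrArg (fun μ => μ C) hfinal
  simp only [Measure.smul_apply, smul_eq_mul] at h2
  rw [Measure.map_apply_of_aemeasurable hae hC, Measure.map_apply (measurable_shY hX 0) hC,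
    Measure.restrict_apply' hDm, inter_comm] at h2
  exact h2

lemma RC.shift {g : ℝ → ℝ} (hg : RC g) {T : ℝ} (hT : 0 ≤ T) (c : ℝ) :
    RC (fun s => g (T + s) - c) := by
  intro t ht
  have h1 := hg (T + t) (by linarith)
  refine ContinuousWithinAt.sub ?_ continuousWithinAt_const
  refine ContinuousWithinAt.comp (t := Ici (T + t)) h1 (by fun_prop) ?_
  intro s hs
  simp only [mem_Ici] at hs ⊢
  linarith

noncomputable def oT (X : ℝ → Ω → ℝ) (y : ℝ) (ω : Ω) : ℝ≥0∞ := opT (samp (fun t => X t ω)) y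

noncomputable def sT (X : ℝ → Ω → ℝ) (y : ℝ) (ω : Ω) : ℝ≥0∞ := stT (samp (fun t => X t ω)) y

lemma measurable_samp (hX : IsLevy P F X) : Measurable (fun ω => samp (fun t => X t ω)) :=
  measurable_pi_lambda _ fun _ => meas_X hX _

lemma measurable_oT (hX : IsLevy P F X) (y : ℝ) : Measurable (oT X y) :=
  (measurable_opT y).comp (measurable_samp hX)

lemma measurable_sT (hX : IsLevy P F X) (y : ℝ) : Measurable (sT X y) :=
  (measurable_stT y).comp (measurable_samp hX)

lemma stopping_oT (hX : IsLevy P F X) (y t : ℝ) :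
    MeasurableSet[F t] {ω | oT X y ω < ENNReal.ofReal t} := by
  have : {ω | oT X y ω < ENNReal.ofReal t} =
      ⋃ p : ℕ × ℕ, ⋃ (_ : ENNReal.ofReal (tm p) < ENNReal.ofReal t), X (tm p) ⁻¹' Ioi y := by
    ext ω
    simp only [oT, opT, samp, mem_ofPred_eq, iInf_lt_iff, mem_iUnion, mem_preimage, mem_Ioi,
      exists_prop]
    exact exists_congr fun p => and_comm
  rw [this]
  refine MeasurableSet.iUnion fun p => MeasurableSet.iUnion fun hp => ?_
  have hle : tm p ≤ t := by
    by_contra hlt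
    push Not at hlt
    exact absurd hp (not_lt.2 (ENNReal.ofReal_le_ofReal hlt.le))
  exact F.mono hle _ (hX.adapted _ measurableSet_Ioi)

lemma stopping_sT (hX : IsLevy P F X) (y t : ℝ) :
    MeasurableSet[F t] {ω | sT X y ω < ENNReal.ofReal t} := by
  have : {ω | sT X y ω < ENNReal.ofReal t} =
      ⋃ q : ℚ, ⋃ (_ : ENNReal.ofReal (q : ℝ) < ENNReal.ofReal t),
        ⋂ k : ℕ, {ω | oT X (y - 1 / ((k : ℝ) + 1)) ω < ENNReal.ofReal (q : ℝ)} := by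
    ext ω
    simp only [mem_ofPred_eq, mem_iUnion, mem_iInter, exists_prop]
    constructor
    · intro h
      obtain ⟨q, _, h1, h2⟩ := ENNReal.lt_iff_exists_rat_btwn.1 h
      refine ⟨q, h2, fun k => lt_of_le_of_lt ?_ h1⟩
      exact le_iSup (fun k : ℕ => oT X (y - 1 / ((k : ℝ) + 1)) ω) k
    · rintro ⟨q, h1, h2⟩
      refine lt_of_le_of_lt ?_ h1
      exact iSup_le fun k => (h2 k).le
  rw [this]
  refine MeasurableSet.iUnion fun q => MeasurableSet.iUnion fun hq => MeasurableSet.iInter fun k => ?_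
  have hle : (q : ℝ) ≤ t := by
    by_contra hlt
    push Not at hlt
    exact absurd hq (not_lt.2 (ENNReal.ofReal_le_ofReal hlt.le))
  exact F.mono hle _ (stopping_oT hX _ _)

lemma qlc_aux (hX : IsLevy P F X) (y : ℝ) {ε : ℝ} (hε : 0 < ε) :
    ∀ᵐ ω ∂P, sT X y ω < ⊤ → y - 2 * ε ≤ X (sT X y ω).toReal ω := by
  have := hX.isProb
  have hrc : ∀ᵐ ω ∂P, RC (fun t => X t ω) := by
    filter_upwards [hX.cadlag] with ω hω using hω.1
  let E : Set Ω := {ω | RC (fun t => X t ω) ∧ sT X y ω < ⊤ ∧ X (sT X y ω).toReal ω < y - 2 * ε}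
  suffices hE : P E = 0 by
    filter_upwards [hrc, measure_eq_zero_iff_ae_notMem.1 hE] with ω h1 h2 h3
    by_contra h4
    exact h2 ⟨h1, h3, not_le.1 h4⟩
  let C : ℕ → Set (ℕ × ℕ → ℝ) := fun n => ⋃ p : ℕ × ℕ, ⋃ (_ : tm p < 1 / ((n : ℝ) + 1)),
    {w | w p < -ε}
  have hC : ∀ n, MeasurableSet (C n) := fun n =>
    MeasurableSet.iUnion fun p => MeasurableSet.iUnion fun _ =>
      measurableSet_lt (measurable_pi_apply p) measurable_const
  let σ : ℕ → Ω → ℝ≥0∞ := fun k => oT X (y - 1 / ((k : ℝ) + 1))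
  have hσle : ∀ k ω, σ k ω ≤ sT X y ω := fun k ω =>
    le_iSup (fun k : ℕ => oT X (y - 1 / ((k : ℝ) + 1)) ω) k
  let G : ℕ → ℕ → Set Ω := fun n k =>
    {ω | sT X y ω < ⊤} ∩ {ω | σ k ω + ENNReal.ofReal (1 / ((n : ℝ) + 1)) ≤ sT X y ω}
  have hG : ∀ n k, MeasurableSet (G n k) := fun n k =>
    (measurableSet_lt (measurable_sT hX y) measurable_const).inter
      (measurableSet_le ((measurable_oT hX _).add_const _) (measurable_sT hX y))
  have hmono : ∀ ω, Monotone fun k => σ k ω := by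
    intro ω i j hij
    have : (1 : ℝ) / ((j : ℝ) + 1) ≤ 1 / ((i : ℝ) + 1) := by gcongr
    have hop : ∀ (w : ℕ × ℕ → ℝ) (a b : ℝ), a ≤ b → opT w a ≤ opT w b := fun w a b hab =>
      le_iInf₂ fun p hp => iInf₂_le (f := fun (p : ℕ × ℕ) (_ : a < w p) => ENNReal.ofReal (tm p))
        p (lt_of_le_of_lt hab hp)
    exact hop _ _ _ (by linarith)
  have hGlim : ∀ n, Tendsto (fun k => P (G n k)) atTop (𝓝 0) := by
    intro n
    have h1 := tendsto_measure_iInter_atTop (μ := P) (s := G n)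
      (fun k => (hG n k).nullMeasurableSet) (by
        intro i j hij ω hω
        exact ⟨hω.1, le_trans (add_le_add_left (hmono ω hij) _) hω.2⟩)
      ⟨0, measure_ne_top _ _⟩
    have h2 : ⋂ k, G n k = ∅ := by
      refine Set.eq_empty_of_forall_notMem fun ω hω => ?_
      rw [mem_iInter] at hω
      have hfin : sT X y ω < ⊤ := (hω 0).1
      have hle : sT X y ω + ENNReal.ofReal (1 / ((n : ℝ) + 1)) ≤ sT X y ω := by
        have : sT X y ω = ⨆ k, σ k ω := rfl
        conv_lhs => rw [this]
        rw [ENNReal.iSup_add]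
        exact iSup_le fun k => (hω k).2
      have hp : ENNReal.ofReal (1 / ((n : ℝ) + 1)) ≠ 0 := by
        rw [Ne, ENNReal.ofReal_eq_zero, not_le]; positivity
      exact absurd hle (not_le.2 (ENNReal.lt_add_right hfin.ne hp))
    rw [h2, measure_empty] at h1
    exact h1
  have hClim : Tendsto (fun n => P {ω | shY X 0 ω ∈ C n}) atTop (𝓝 0) := by
    have h1 := tendsto_measure_iInter_atTop (μ := P) (s := fun n => {ω | shY X 0 ω ∈ C n})
      (fun n => (measurable_shY hX 0 (hC n)).nullMeasurableSet) (by
        intro i j hij ω hω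
        simp only [C, mem_ofPred_eq, mem_iUnion, exists_prop] at hω ⊢
        obtain ⟨p, hp, hp2⟩ := hω
        refine ⟨p, lt_of_lt_of_le hp ?_, hp2⟩
        gcongr)
      ⟨0, measure_ne_top _ _⟩
    have h2 : P (⋂ n, {ω | shY X 0 ω ∈ C n}) = 0 := by
      rw [measure_eq_zero_iff_ae_notMem]
      filter_upwards [hrc] with ω hω hmem
      rw [mem_iInter] at hmem
      have hg := hω.shift le_rfl (X 0 ω)
      obtain ⟨δ, hδ, H⟩ : ∃ δ > 0, ∀ s, 0 ≤ s → s < 0 + δ → -(X (0 + s) ω - X 0 ω) < ε := by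
        have hg' : RC (fun s => -(X (0 + s) ω - X 0 ω)) := fun t ht => (hg t ht).neg
        exact hg'.exists_lt le_rfl (by simpa using hε)
      obtain ⟨n, hn⟩ := exists_nat_one_div_lt hδ
      have := hmem n
      simp only [C, mem_ofPred_eq, mem_iUnion, exists_prop, shY, samp] at this
      obtain ⟨p, hp, hp2⟩ := this
      have := H (tm p) (tm_nonneg p) (by linarith)
      linarith
    rw [h2] at h1
    exact h1
  have hbound : ∀ n, ∀ᶠ k in atTop, P E ≤ P (G n k) + P {ω | shY X 0 ω ∈ C n} := by
    intro n
    obtain ⟨k0, hk0⟩ := exists_nat_one_div_lt hε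
    filter_upwards [eventually_ge_atTop k0] with k hk
    have hkε : 1 / ((k : ℝ) + 1) < ε := by
      refine lt_of_le_of_lt ?_ hk0
      gcongr
    have hsub : E ⊆ G n k ∪ ({ω | σ k ω < ⊤} ∩ {ω | shY X (σ k ω).toReal ω ∈ C n}) := by
      rintro ω ⟨hω, hfin, hval⟩
      by_cases hGω : ω ∈ G n k
      · exact Or.inl hGω
      right
      have hlt : sT X y ω < σ k ω + ENNReal.ofReal (1 / ((n : ℝ) + 1)) := by
        by_contra hcon
        exact hGω ⟨hfin, not_lt.1 hcon⟩
      have hσf : σ k ω < ⊤ := lt_of_le_of_lt (hσle k ω) hfin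
      refine ⟨hσf, ?_⟩
      have hσ0 : 0 ≤ (σ k ω).toReal := ENNReal.toReal_nonneg
      have hs0 : 0 ≤ (sT X y ω).toReal - (σ k ω).toReal :=
        sub_nonneg.2 (ENNReal.toReal_mono hfin.ne (hσle k ω))
      have hsh : (sT X y ω).toReal - (σ k ω).toReal < 1 / ((n : ℝ) + 1) := by
        have h1 := (ENNReal.toReal_lt_toReal hfin.ne
          (ENNReal.add_lt_top.2 ⟨hσf, ENNReal.ofReal_lt_top⟩).ne).2 hlt
        rw [ENNReal.toReal_add hσf.ne ENNReal.ofReal_ne_top,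
          ENNReal.toReal_ofReal (by positivity)] at h1
        linarith
      have hlow : y - 1 / ((k : ℝ) + 1) ≤ X (σ k ω).toReal ω := le_opT hω hσf
      have hg := hω.shift hσ0 (X (σ k ω).toReal ω)
      have e0 : X ((σ k ω).toReal + ((sT X y ω).toReal - (σ k ω).toReal)) ω
          - X (σ k ω).toReal ω < -ε := by
        rw [add_sub_cancel]; linarith
      have e1 := (hg.samp_tendsto hs0).eventually (gt_mem_nhds e0)
      have e2 := (upI_tendsto hs0).eventually (gt_mem_nhds hsh)
      obtain ⟨N, hN1, hN2⟩ := (e1.and e2).exists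
      simp only [C, mem_ofPred_eq, mem_iUnion, exists_prop]
      exact ⟨_, hN2, hN1⟩
    calc P E ≤ P (G n k) + P ({ω | σ k ω < ⊤} ∩ {ω | shY X (σ k ω).toReal ω ∈ C n}) :=
          (measure_mono hsub).trans (measure_union_le _ _)
      _ ≤ _ := by
          rw [strongMarkov hX (measurable_oT hX _) (fun t _ => stopping_oT hX _ t) (hC n)]
          gcongr
          exact mul_le_of_le_one_left' prob_le_one
  have hb2 : ∀ n, P E ≤ P {ω | shY X 0 ω ∈ C n} := by
    intro n
    have := (hGlim n).add_const (P {ω | shY X 0 ω ∈ C n})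
    rw [zero_add] at this
    exact ge_of_tendsto this (hbound n)
  exact le_antisymm (ge_of_tendsto hClim (Eventually.of_forall hb2)) zero_le

lemma qlc (hX : IsLevy P F X) (y : ℝ) :
    ∀ᵐ ω ∂P, sT X y ω < ⊤ → y ≤ X (sT X y ω).toReal ω := by
  have h : ∀ᵐ ω ∂P, ∀ n : ℕ, sT X y ω < ⊤ →
      y - 2 * (1 / ((n : ℝ) + 1)) ≤ X (sT X y ω).toReal ω :=
    ae_all_iff.2 fun n => qlc_aux hX y (by positivity)
  filter_upwards [h] with ω hω hfin
  have ht : Tendsto (fun n : ℕ => y - 2 * (1 / ((n : ℝ) + 1))) atTop (𝓝 (y - 2 * 0)) :=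
    (tendsto_one_div_add_atTop_nhds_zero_nat.const_mul 2).const_sub y
  have := le_of_tendsto ht (Eventually.of_forall fun n => hω n hfin)
  linarith

def aeHit (P : Measure Ω) (X : ℝ → Ω → ℝ) (a f : ℝ) : Prop :=
  ∀ᵐ ω ∂P, hitT X a ω < ⊤ → X (hitT X a ω).toReal ω = f

lemma Qfun_iff (y r : ℝ) : Qfun P X y ({r}ᶜ) = 0 ↔ aeHit P X y r := by
  unfold Qfun aeHit
  rw [ae_iff]
  have : {ω | stopVal X y ω ∈ ({r}ᶜ : Set ℝ)} ∩ {ω | hitT X y ω < ⊤} =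
      {ω | ¬ (hitT X y ω < ⊤ → X (hitT X y ω).toReal ω = r)} := by
    ext ω
    simp only [stopVal, mem_inter_iff, mem_ofPred_eq, mem_compl_iff, mem_singleton_iff]
    tauto
  rw [this]

lemma ae_rc (hX : IsLevy P F X) : ∀ᵐ ω ∂P, RC (fun t => X t ω) := by
  filter_upwards [hX.cadlag] with ω hω using hω.1

lemma ae_zero (hX : IsLevy P F X) : ∀ᵐ ω ∂P, X 0 ω = 0 := by
  have := hX.isProb
  have h : MeasurableSet {ω | X 0 ω = 0} := meas_X hX 0 (measurableSet_singleton 0)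
  exact (prob_compl_eq_zero_iff h).2 hX.start

lemma aeHit_mono (hX : IsLevy P F X) {x z f : ℝ} (h : aeHit P X x f) (hxz : x ≤ z) (hzf : z ≤ f) :
    aeHit P X z f := by
  filter_upwards [h] with ω hω hfin
  have hle : hitT X x ω ≤ hitT X z ω := by
    refine sInf_le_sInf (image_mono ?_)
    rintro t ⟨h0, h1⟩
    exact ⟨h0, hxz.trans h1⟩
  have hfx := lt_of_le_of_lt hle hfin
  have h1 := hω hfx
  have h2 : hitT X z ω ≤ hitT X x ω := by
    have : hitT X z ω ≤ ENNReal.ofReal (hitT X x ω).toReal :=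
      hitP_le (g := fun t => X t ω) ENNReal.toReal_nonneg (by simp only [h1]; exact hzf)
    rwa [ENNReal.ofReal_toReal hfx.ne] at this
  rw [le_antisymm h2 hle, h1]

lemma ae_good (hX : IsLevy P F X) {z f : ℝ} (h : aeHit P X z f) :
    P {ω | shY X 0 ω ∈ (good z f)ᶜ} = 0 := by
  rw [measure_eq_zero_iff_ae_notMem]
  filter_upwards [h, ae_rc hX, ae_zero hX, qlc hX z] with ω h1 h2 h3 h4 h5
  apply h5
  have e : shY X 0 ω = samp (fun t => X t ω) := by
    unfold shY; simp [h3]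
  rw [e, good_iff h2]
  intro hfin
  have h6 : hitT X z ω = sT X z ω := hitP_eq h2 hfin (h4 hfin)
  rw [h6] at h1
  exact h1 hfin

lemma aeHit_step (hX : IsLevy P F X) {a z f : ℝ} (ha : aeHit P X a a) (hz : 0 ≤ z) (hzf : z ≤ f)
    (h : aeHit P X z f) : aeHit P X (a + z) (a + f) := by
  have h1 := strongMarkov hX (measurable_sT hX a) (fun t _ => stopping_sT hX a t)
    (measurableSet_good z f).compl
  rw [ae_good hX h, mul_zero, measure_eq_zero_iff_ae_notMem] at h1
  filter_upwards [h1, ae_rc hX, qlc hX a, ha] with ω h1 h2 h3 h4 hfin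
  refine hit_concat (g := fun t => X t ω) h2 hz hzf h4 (fun hfa => ?_) hfin
  have h5 : sT X a ω < ⊤ := lt_of_le_of_lt (stT_le_hitP h2) hfa
  have h6 : hitP (fun t => X t ω) a = sT X a ω := hitP_eq h2 h5 (h3 h5)
  rw [h6]
  by_contra h7
  exact h1 ⟨h5, h7⟩

lemma aeHit_zero (hX : IsLevy P F X) : aeHit P X 0 0 := by
  filter_upwards [ae_zero hX] with ω h _
  have : hitT X 0 ω ≤ ENNReal.ofReal 0 :=
    hitP_le (g := fun t => X t ω) le_rfl (by simp only [h]; exact le_rfl)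
  simp only [ENNReal.ofReal_zero, nonpos_iff_eq_zero] at this
  rw [this]
  simpa using h

lemma aeHit_nat (hX : IsLevy P F X) {f : ℝ} (hf : 0 ≤ f) (h : aeHit P X f f) (n : ℕ) :
    aeHit P X ((n : ℝ) * f) ((n : ℝ) * f) := by
  induction n with
  | zero => simpa using aeHit_zero hX
  | succ n ih =>
    have := aeHit_step hX ih hf le_rfl h
    have e : ((n + 1 : ℕ) : ℝ) * f = n * f + f := by push_cast; ring
    rw [e]; exact this

end

end LadderAux

/-- If `x > 0`, `P(T_x < ∞) > 0` and `Q^x = P(T_x < ∞)·δ_{f(x)}`, then `f(x) ≥ x` and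
`⋃_{n ∈ ℕ₀} [x + n·f(x), (n+1)·f(x)] ⊆ 𝒜`, where `𝒜` is the set of levels whose
overshoot law is carried by a singleton. -/
theorem ladder_subset_of_singleton_carrier {Ω : Type*} {m0 : MeasurableSpace Ω}
    (P : Measure Ω) (F : MeasureTheory.Filtration ℝ m0) (X : ℝ → Ω → ℝ)
    (hX : IsLevy P F X)
    (x : ℝ) (hx : 0 < x) (hpos : 0 < P {ω | hitT X x ω < ⊤})
    (fx : ℝ) (hcarr : Qfun P X x ({fx}ᶜ) = 0) :
    x ≤ fx ∧
    (⋃ n : ℕ, Set.Icc (x + (n : ℝ) * fx) (((n : ℝ) + 1) * fx)) ⊆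
      {y : ℝ | ∃ r : ℝ, Qfun P X y ({r}ᶜ) = 0} := by
  rw [LadderAux.Qfun_iff] at hcarr
  have hxf : x ≤ fx := by
    by_contra hlt
    have : P {ω | hitT X x ω < ⊤} = 0 := by
      rw [measure_eq_zero_iff_ae_notMem]
      filter_upwards [hcarr, LadderAux.ae_rc hX] with ω h1 h2 h3
      have h4 : x ≤ X (hitT X x ω).toReal ω := LadderAux.le_hitP h2 h3
      rw [h1 h3] at h4
      exact hlt h4
    exact hpos.ne' this
  refine ⟨hxf, ?_⟩
  intro y hy
  obtain ⟨n, hn1, hn2⟩ := mem_iUnion.1 hy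
  have hff := LadderAux.aeHit_mono hX hcarr hxf le_rfl
  have hnn := LadderAux.aeHit_nat hX (hx.le.trans hxf) hff n
  have hz := LadderAux.aeHit_mono hX (z := y - n * fx) hcarr (by linarith) (by linarith)
  have hst := LadderAux.aeHit_step hX hnn (by linarith) (by linarith) hz
  refine ⟨n * fx + fx, ?_⟩
  rw [LadderAux.Qfun_iff]
  simpa using hst
end

section
/- Let X be a real-valued Lévy process on a filtered probability space satisfying the usual conditions. Then P(T_x < ∞) = 0 for some x > 0 if and only if P(T_x < ∞) = 0 for every x > 0. -/
open MeasureTheory ProbabilityTheory Filter Set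
open scoped ENNReal Topology

theorem levy_iter {Ω : Type*} {m0 : MeasurableSpace Ω}
    (P : Measure Ω) (F : MeasureTheory.Filtration ℝ m0) (X : ℝ → Ω → ℝ)
    (hX : IsLevy P F X) (t a : ℝ) (ht : 0 ≤ t) (hp : P {ω | a ≤ X t ω} ≠ 0) (n : ℕ) :
    P {ω | n * a ≤ X (n * t) ω} ≠ 0 := by
  have hm : ∀ s, Measurable (X s) := fun s => (hX.adapted s).mono (F.le s) le_rfl
  induction n with
  | zero =>
    intro h0
    have h1 : P {ω | X 0 ω = 0} ≤ 0 := by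
      rw [← h0]
      apply measure_mono
      intro ω hω
      have : X 0 ω = 0 := hω
      simp [this]
    rw [hX.start] at h1
    simp at h1
  | succ n ih =>
    have hnt : 0 ≤ (n : ℝ) * t := by positivity
    have hle : (n : ℝ) * t ≤ (n + 1 : ℕ) * t := by push_cast; linarith
    have hind := hX.indep _ _ hnt hle
    have hst := hX.statInc _ _ hnt hle
    have e : ((n + 1 : ℕ) : ℝ) * t - n * t = t := by push_cast; ring
    rw [e] at hst
    have hA : P {ω | a ≤ X ((n + 1 : ℕ) * t) ω - X (n * t) ω} = P {ω | a ≤ X t ω} := by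
      have := congrArg (fun μ => μ (Ici a)) hst
      rw [Measure.map_apply (by fun_prop) measurableSet_Ici,
        Measure.map_apply (hm _) measurableSet_Ici] at this
      exact this
    have hI := (Indep_iff _ _ P).1 hind {ω | a ≤ X ((n + 1 : ℕ) * t) ω - X (n * t) ω}
      {ω | n * a ≤ X (n * t) ω} ⟨Ici a, measurableSet_Ici, rfl⟩
      ((hX.adapted (n * t)) measurableSet_Ici)
    intro h0
    have h2 : P ({ω | a ≤ X ((n + 1 : ℕ) * t) ω - X (n * t) ω} ∩ {ω | n * a ≤ X (n * t) ω}) = 0 := by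
      refine measure_mono_null ?_ h0
      rintro ω ⟨h1, h2⟩
      simp only [mem_ofPred_eq] at h1 h2 ⊢
      push_cast at h1 h2 ⊢
      linarith
    rw [hI, hA] at h2
    exact (mul_ne_zero hp ih) h2

theorem hitT_lt_top_iff {Ω : Type*} (X : ℝ → Ω → ℝ) (x : ℝ) (ω : Ω) :
    hitT X x ω < ⊤ ↔ ∃ t : ℝ, 0 ≤ t ∧ x ≤ X t ω := by
  unfold hitT
  rw [sInf_lt_iff]
  constructor
  · rintro ⟨_, ⟨t, ht, rfl⟩, _⟩
    exact ⟨t, ht⟩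
  · rintro ⟨t, ht⟩
    exact ⟨_, ⟨t, ht, rfl⟩, ENNReal.ofReal_lt_top⟩

/-- For a Lévy process, `P(T_x < ∞) = 0` for some `x > 0` iff `P(T_x < ∞) = 0` for
every `x > 0`. -/
theorem never_passes_some_iff_all {Ω : Type*} {m0 : MeasurableSpace Ω}
    (P : Measure Ω) (F : MeasureTheory.Filtration ℝ m0) (X : ℝ → Ω → ℝ)
    (hX : IsLevy P F X) :
    (∃ x : ℝ, 0 < x ∧ P {ω | hitT X x ω < ⊤} = 0) ↔
    (∀ x : ℝ, 0 < x → P {ω | hitT X x ω < ⊤} = 0) := by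
  refine ⟨?_, fun h => ⟨1, one_pos, h 1 one_pos⟩⟩
  rintro ⟨x, hx, h0⟩ y hy
  have key : ∀ t : ℝ, 0 ≤ t → ∀ᵐ ω ∂P, X t ω ≤ 0 := by
    intro t ht
    have h1 : ∀ n : ℕ, ∀ᵐ ω ∂P, X t ω < x / (n + 1 : ℕ) := by
      intro n
      by_contra hc
      have hc' : P {ω | x / (n + 1 : ℕ) ≤ X t ω} ≠ 0 := by
        intro h
        apply hc
        rw [ae_iff]
        simpa only [not_lt] using h
      refine levy_iter P F X hX t _ ht hc' (n + 1) (measure_mono_null ?_ h0)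
      intro ω hω
      have hω' : ((n + 1 : ℕ) : ℝ) * (x / (n + 1 : ℕ)) ≤ X ((n + 1 : ℕ) * t) ω := hω
      rw [mul_div_cancel₀ _ (by positivity)] at hω'
      exact (hitT_lt_top_iff X x ω).2 ⟨_, by positivity, hω'⟩
    filter_upwards [ae_all_iff.2 h1] with ω hω
    by_contra hc
    push Not at hc
    obtain ⟨n, hn⟩ := exists_nat_gt (x / X t ω)
    have := hω n
    rw [lt_div_iff₀ (by positivity)] at this
    rw [div_lt_iff₀ hc] at hn
    push_cast at this
    nlinarith
  have hq : ∀ᵐ ω ∂P, ∀ q : ℚ, 0 ≤ (q : ℝ) → X q ω ≤ 0 := by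
    rw [ae_all_iff]
    intro q
    by_cases h : 0 ≤ (q : ℝ)
    · filter_upwards [key q h] with ω hω _ using hω
    · exact Eventually.of_forall fun ω h' => absurd h' h
  have hfin : ∀ᵐ ω ∂P, ¬ hitT X y ω < ⊤ := by
    filter_upwards [hq, hX.cadlag] with ω hω hc
    rw [hitT_lt_top_iff]
    rintro ⟨t, ht, hyt⟩
    have hev : ∀ᶠ s in 𝓝[≥] t, 0 < X s ω :=
      (hc.1 t ht).eventually (lt_mem_nhds (lt_of_lt_of_le hy hyt))
    obtain ⟨u, hu, hsub⟩ := mem_nhdsGE_iff_exists_Ico_subset.1 hev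
    obtain ⟨q, hq1, hq2⟩ := exists_rat_btwn (show t < u from hu)
    have h3 : 0 < X q ω := hsub ⟨hq1.le, hq2⟩
    exact absurd (hω q (ht.trans hq1.le)) (not_le.2 h3)
  rw [ae_iff] at hfin
  simpa only [not_not] using hfin
end
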